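/- Let k ∈ (0,1) and α ∈ (0, K(k)). Set q := e^{−πK'(k)/K(k)}, H(x) := θ₁(πx/(2K(k)); q), Θ(x) := θ₄(πx/(2K(k)); q), c₀ := 1 + k², β := [1 − 2(1+k)²·sn(α;k)²/(1 + k·sn(α;k)²)²]·Θ(2α)/Θ(0), γ := Θ(2α)/Θ(0), κ := Z(α;k) + k·sn(α;k)·cn(α;k)·dn(α;k)/(1 + k·sn(α;k)²), and c := c₀ + 2k(1+k)²·(1 − k·sn(α;k)²)·sn(α;k)·dn(α;k)·cn(α;k)/( [Z(α;k)(1 + k·sn(α;k)²) + k·sn(α;k)·dn(α;k)·cn(α;k)]·(1 + k·sn(α;k)²)² ). Fix x₀ ∈ ℝ and, for (x,t) ∈ ℝ², set ξ := x + c₀t and η := κ·(x + ct + x₀). Then the denominator D(x,t) := Θ(ξ+2α)e^{−2η} + Θ(ξ−2α)e^{2η} + 2γΘ(ξ) is strictly positive for all (x,t), and the function û(x,t) := (H(K(k))/Θ(K(k)))·( H(ξ+2α)e^{−2η} + H(ξ−2α)e^{2η} + 2βH(ξ) ) / D(x,t) is smooth on ℝ × ℝ and satisfies the mKdV equation û_t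 − 6û²û_x + û_xxx = 0 at every point (x,t). -/

import Mathlib

noncomputable section

/-- Partial derivative in the first (spatial) variable. -/
def ux (u : ℝ × ℝ → ℝ) (p : ℝ × ℝ) : ℝ := deriv (fun y => u (y, p.2)) p.1

/-- Partial derivative in the second (temporal) variable. -/
def ut (u : ℝ × ℝ → ℝ) (p : ℝ × ℝ) : ℝ := deriv (fun s => u (p.1, s)) p.2

/-- The complete elliptic integral of the first kind. -/
def Kcomp (k : ℝ) : ℝ :=
  ∫ θ in (0 : ℝ)..(Real.pi / 2), (Real.sqrt (1 - k ^ 2 * Real.sin θ ^ 2))⁻¹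

/-- The complete elliptic integral of the second kind. -/
def Ecomp (k : ℝ) : ℝ :=
  ∫ θ in (0 : ℝ)..(Real.pi / 2), Real.sqrt (1 - k ^ 2 * Real.sin θ ^ 2)

/-- The Jacobi zeta function `Z(α;k) = ∫₀^α dn(t;k)² dt − (E/K)·α`. -/
def Zjac (k : ℝ) (dn : ℝ → ℝ) (α : ℝ) : ℝ :=
  (∫ t in (0 : ℝ)..α, (dn t) ^ 2) - (Ecomp k / Kcomp k) * α

/-- The Jacobi theta function `θ₁(y;q) = 2·Σ_{n≥1} (−1)^{n−1} q^{(n−1/2)²} sin((2n−1)y)`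
(the sum runs over `n : ℕ`, representing the index `n + 1 ≥ 1`). -/
def theta1R (q y : ℝ) : ℝ :=
  2 * ∑' n : ℕ, (-1 : ℝ) ^ n * q ^ (((n : ℝ) + 1 / 2) ^ 2) *
    Real.sin ((2 * (n : ℝ) + 1) * y)

/-- The Jacobi theta function `θ₄(y;q) = 1 + 2·Σ_{n≥1} (−1)ⁿ q^{n²} cos(2ny)`
(the sum runs over `n : ℕ`, representing the index `n + 1 ≥ 1`). -/
def theta4R (q y : ℝ) : ℝ :=
  1 + 2 * ∑' n : ℕ, (-1 : ℝ) ^ (n + 1) * q ^ ((n + 1) ^ 2) *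
    Real.cos (2 * ((n : ℝ) + 1) * y)

/-- The nome `q = e^{−πK'(k)/K(k)}` with `K'(k) = K(√(1−k²))`. -/
def nome (k : ℝ) : ℝ :=
  Real.exp (-(Real.pi * Kcomp (Real.sqrt (1 - k ^ 2)) / Kcomp k))

/-- `H(x) = θ₁(πx/(2K(k)); q)`. -/
def Hf (k x : ℝ) : ℝ := theta1R (nome k) (Real.pi * x / (2 * Kcomp k))

/-- `Θ(x) = θ₄(πx/(2K(k)); q)`. -/
def THf (k x : ℝ) : ℝ := theta4R (nome k) (Real.pi * x / (2 * Kcomp k))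

/-- The parameter `β` of the dark breather. -/
def betaPar (k : ℝ) (sn : ℝ → ℝ) (α : ℝ) : ℝ :=
  (1 - 2 * (1 + k) ^ 2 * (sn α) ^ 2 / (1 + k * (sn α) ^ 2) ^ 2) * (THf k (2 * α) / THf k 0)

/-- The parameter `γ` of the dark breather. -/
def gammaPar (k α : ℝ) : ℝ := THf k (2 * α) / THf k 0

/-- The inverse localization width `κ` of the dark breather. -/
def kapWidth (k : ℝ) (sn cn dn : ℝ → ℝ) (α : ℝ) : ℝ :=
  Zjac k dn α + k * sn α * cn α * dn α / (1 + k * (sn α) ^ 2)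

/-- The dark breather speed `c`. -/
def cSpeed (k : ℝ) (sn cn dn : ℝ → ℝ) (α : ℝ) : ℝ :=
  (1 + k ^ 2) +
    2 * k * (1 + k) ^ 2 * (1 - k * (sn α) ^ 2) * sn α * dn α * cn α /
      ((Zjac k dn α * (1 + k * (sn α) ^ 2) + k * sn α * dn α * cn α) *
        (1 + k * (sn α) ^ 2) ^ 2)

/-- The traveling variable `ξ = x + (1+k²)t`. -/
def xiVar (k : ℝ) (w : ℝ × ℝ) : ℝ := w.1 + (1 + k ^ 2) * w.2

/-- The breather variable `η = κ(x + ct + x₀)`. -/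
def etaVar (k : ℝ) (sn cn dn : ℝ → ℝ) (α x₀ : ℝ) (w : ℝ × ℝ) : ℝ :=
  kapWidth k sn cn dn α * (w.1 + cSpeed k sn cn dn α * w.2 + x₀)

/-- The denominator of the dark-breather solution. -/
def Dden (k : ℝ) (sn cn dn : ℝ → ℝ) (α x₀ : ℝ) (w : ℝ × ℝ) : ℝ :=
  THf k (xiVar k w + 2 * α) * Real.exp (-(2 * etaVar k sn cn dn α x₀ w)) +
  THf k (xiVar k w - 2 * α) * Real.exp (2 * etaVar k sn cn dn α x₀ w) +
  2 * gammaPar k α * THf k (xiVar k w)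

/-- The dark-breather solution `û` of the defocusing mKdV equation. -/
def uhat (k : ℝ) (sn cn dn : ℝ → ℝ) (α x₀ : ℝ) (w : ℝ × ℝ) : ℝ :=
  (Hf k (Kcomp k) / THf k (Kcomp k)) *
    (Hf k (xiVar k w + 2 * α) * Real.exp (-(2 * etaVar k sn cn dn α x₀ w)) +
     Hf k (xiVar k w - 2 * α) * Real.exp (2 * etaVar k sn cn dn α x₀ w) +
     2 * betaPar k sn α * Hf k (xiVar k w)) / Dden k sn cn dn α x₀ w

/-! Write the breather as a quotient `g / f`. Both `f` and `g` are combinations of three modes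
`Θ(ξ + σ) e^{m (x + c t + x₀)}` with `σ ∈ {2α, 0, -2α}`, those in `g` being multiplied by
`k sn(ξ + σ)`, because `H / Θ = √k sn`. The mKdV equation for `g / f` follows from Hirota's two
bilinear equations for the pair `(g, f)`. As `Θ' / Θ = Z`, each bilinear equation splits into
relations between pairs of modes whose arguments differ by `2α` or `4α`, and these are consequences
of the addition theorems for `sn` and `Z`; they force the values of `β`, `γ`, `κ` and `c`.

The identities `H / Θ = √k sn` and `Θ' / Θ = Z` come from the product formulas for theta functions:
for every nome `exp (-π a)`, suitable theta quotients solve Jacobi's system with modulus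
`θ₂(0)² / θ₃(0)²`. The modular transformation shows that this modulus has `K' / K = a`, and `K' / K`
is strictly monotone in the modulus, so the nome `exp (-π K' / K)` belongs to the modulus `k`. -/

/-! ### Jacobi elliptic functions -/

/-- The Jacobi elliptic functions of modulus `k ∈ (0, 1)`, characterised by their differential
system and initial values. -/
structure IsJacobiTriple (k : ℝ) (sn cn dn : ℝ → ℝ) : Prop where
  modulus_pos : 0 < k
  modulus_lt_one : k < 1
  hasDerivAt_sn : ∀ x, HasDerivAt sn (cn x * dn x) x
  hasDerivAt_cn : ∀ x, HasDerivAt cn (-(sn x * dn x)) x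
  hasDerivAt_dn : ∀ x, HasDerivAt dn (-(k ^ 2 * sn x * cn x)) x
  sn_zero : sn 0 = 0
  cn_zero : cn 0 = 1
  dn_zero : dn 0 = 1

theorem eq_of_forall_hasDerivAt_zero {f : ℝ → ℝ} (h : ∀ x, HasDerivAt f 0 x) (x y : ℝ) :
    f x = f y :=
  is_const_of_deriv_eq_zero (fun x => (h x).differentiableAt) (fun x => (h x).deriv) x y

theorem div_eq_div_of_wronskian_eq_zero {f g f' g' : ℝ → ℝ} (hf : ∀ x, HasDerivAt f (f' x) x)
    (hg : ∀ x, HasDerivAt g (g' x) x) (hg0 : ∀ x, g x ≠ 0)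
    (hwronskian : ∀ x, f' x * g x - f x * g' x = 0) (x y : ℝ) : f x / g x = f y / g y := by
  refine eq_of_forall_hasDerivAt_zero (f := fun x => f x / g x) (fun x => ?_) x y
  refine ((hf x).div (hg x) (hg0 x)).congr_deriv ?_
  rw [hwronskian x, zero_div]

namespace IsJacobiTriple

variable {k : ℝ} {sn cn dn : ℝ → ℝ}

theorem modulus_sq_lt_one (J : IsJacobiTriple k sn cn dn) : k ^ 2 < 1 := by
  nlinarith [J.modulus_pos, J.modulus_lt_one]

theorem continuous_dn (J : IsJacobiTriple k sn cn dn) : Continuous dn :=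
  continuous_iff_continuousAt.2 fun x => (J.hasDerivAt_dn x).continuousAt

theorem cn_sq (J : IsJacobiTriple k sn cn dn) (x : ℝ) : cn x ^ 2 = 1 - sn x ^ 2 := by
  have hconst : ∀ x, HasDerivAt (fun x => sn x ^ 2 + cn x ^ 2) 0 x := fun x => by
    refine (((J.hasDerivAt_sn x).pow 2).add ((J.hasDerivAt_cn x).pow 2)).congr_deriv ?_
    push_cast
    ring
  have h := eq_of_forall_hasDerivAt_zero hconst x 0
  simp only [J.sn_zero, J.cn_zero] at h
  linarith

theorem dn_sq (J : IsJacobiTriple k sn cn dn) (x : ℝ) : dn x ^ 2 = 1 - k ^ 2 * sn x ^ 2 := by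
  have hconst : ∀ x, HasDerivAt (fun x => k ^ 2 * sn x ^ 2 + dn x ^ 2) 0 x := fun x => by
    refine ((((J.hasDerivAt_sn x).pow 2).const_mul (k ^ 2)).add
      ((J.hasDerivAt_dn x).pow 2)).congr_deriv ?_
    push_cast
    ring
  have h := eq_of_forall_hasDerivAt_zero hconst x 0
  simp only [J.sn_zero, J.dn_zero] at h
  linarith

theorem cn_mul_dn_sq (J : IsJacobiTriple k sn cn dn) (x : ℝ) :
    (cn x * dn x) ^ 2 = (1 - sn x ^ 2) * (1 - k ^ 2 * sn x ^ 2) := by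
  rw [mul_pow, J.cn_sq, J.dn_sq]

theorem sn_sq_le_one (J : IsJacobiTriple k sn cn dn) (x : ℝ) : sn x ^ 2 ≤ 1 := by
  linarith [J.cn_sq x, sq_nonneg (cn x)]

theorem one_sub_sq_mul_sn_sq_pos (J : IsJacobiTriple k sn cn dn) (x y : ℝ) :
    0 < 1 - k ^ 2 * sn x ^ 2 * sn y ^ 2 := by
  have hx : k ^ 2 * sn x ^ 2 ≤ k ^ 2 := mul_le_of_le_one_right (sq_nonneg k) (J.sn_sq_le_one x)
  have hxy : k ^ 2 * sn x ^ 2 * sn y ^ 2 ≤ k ^ 2 * sn x ^ 2 :=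
    mul_le_of_le_one_right (by positivity) (J.sn_sq_le_one y)
  linarith [J.modulus_sq_lt_one]

theorem one_add_mul_sn_sq_pos (J : IsJacobiTriple k sn cn dn) (x : ℝ) :
    0 < 1 + k * sn x ^ 2 := by
  have := J.modulus_pos
  positivity

theorem one_sub_mul_sn_sq_pos (J : IsJacobiTriple k sn cn dn) (x : ℝ) :
    0 < 1 - k * sn x ^ 2 := by
  linarith [mul_le_of_le_one_right J.modulus_pos.le (J.sn_sq_le_one x), J.modulus_lt_one]

theorem dn_pos (J : IsJacobiTriple k sn cn dn) (x : ℝ) : 0 < dn x := by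
  have hne : ∀ y, dn y ≠ 0 := fun y hy => by
    have h := J.dn_sq y
    rw [hy] at h
    nlinarith [J.sn_sq_le_one y, J.modulus_sq_lt_one, sq_nonneg k]
  by_contra hx
  obtain ⟨y, hy⟩ := mem_range_of_exists_le_of_exists_ge J.continuous_dn ⟨x, not_lt.1 hx⟩
    ⟨0, by rw [J.dn_zero]; norm_num⟩
  exact hne y hy

end IsJacobiTriple

/-! ### Amplitude and elliptic integrals -/

/-- Legendre's incomplete elliptic integral of the first kind `F(θ; k)`; it inverts the
amplitude. -/
def ellipticF (k θ : ℝ) : ℝ := ∫ t in (0 : ℝ)..θ, (√(1 - k ^ 2 * Real.sin t ^ 2))⁻¹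

theorem one_sub_sq_mul_sin_sq_pos {k : ℝ} (hk : k ^ 2 < 1) (t : ℝ) :
    0 < 1 - k ^ 2 * Real.sin t ^ 2 := by
  linarith [mul_le_of_le_one_right (sq_nonneg k) (Real.sin_sq_le_one t)]

theorem continuous_inv_sqrt_one_sub_sq_mul_sin_sq {k : ℝ} (hk : k ^ 2 < 1) :
    Continuous fun t => (√(1 - k ^ 2 * Real.sin t ^ 2))⁻¹ :=
  Continuous.inv₀ (by fun_prop) fun t => (Real.sqrt_pos.2 (one_sub_sq_mul_sin_sq_pos hk t)).ne'

theorem hasDerivAt_ellipticF {k : ℝ} (hk : k ^ 2 < 1) (θ : ℝ) :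
    HasDerivAt (ellipticF k) (√(1 - k ^ 2 * Real.sin θ ^ 2))⁻¹ θ :=
  ((continuous_inv_sqrt_one_sub_sq_mul_sin_sq hk).integral_hasStrictDerivAt 0 θ).hasDerivAt

theorem ellipticF_strictMono {k : ℝ} (hk : k ^ 2 < 1) : StrictMono (ellipticF k) :=
  strictMono_of_hasDerivAt_pos (hasDerivAt_ellipticF hk) fun θ =>
    inv_pos.2 (Real.sqrt_pos.2 (one_sub_sq_mul_sin_sq_pos hk θ))

theorem ellipticF_zero (k : ℝ) : ellipticF k 0 = 0 := intervalIntegral.integral_same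

theorem ellipticF_pi_div_two (k : ℝ) : ellipticF k (Real.pi / 2) = Kcomp k := rfl

theorem Kcomp_pos {k : ℝ} (hk : k ^ 2 < 1) : 0 < Kcomp k := by
  rw [← ellipticF_pi_div_two, ← ellipticF_zero k]
  exact ellipticF_strictMono hk (by positivity)

/-- The Jacobi amplitude `am x = ∫₀ˣ dn`, so that `sn = sin ∘ am` and `cn = cos ∘ am`. -/
def jacobiAm (dn : ℝ → ℝ) (x : ℝ) : ℝ := ∫ t in (0 : ℝ)..x, dn t

theorem jacobiAm_zero (dn : ℝ → ℝ) : jacobiAm dn 0 = 0 := intervalIntegral.integral_same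

namespace IsJacobiTriple

variable {k : ℝ} {sn cn dn : ℝ → ℝ}

theorem hasDerivAt_jacobiAm (J : IsJacobiTriple k sn cn dn) (x : ℝ) :
    HasDerivAt (jacobiAm dn) (dn x) x :=
  (J.continuous_dn.integral_hasStrictDerivAt 0 x).hasDerivAt

theorem jacobiAm_strictMono (J : IsJacobiTriple k sn cn dn) : StrictMono (jacobiAm dn) :=
  strictMono_of_hasDerivAt_pos J.hasDerivAt_jacobiAm J.dn_pos

theorem sn_eq_sin_and_cn_eq_cos (J : IsJacobiTriple k sn cn dn) (x : ℝ) :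
    sn x = Real.sin (jacobiAm dn x) ∧ cn x = Real.cos (jacobiAm dn x) := by
  have hconst : ∀ x, HasDerivAt (fun x =>
      (sn x - Real.sin (jacobiAm dn x)) ^ 2 + (cn x - Real.cos (jacobiAm dn x)) ^ 2) 0 x := by
    intro x
    have ham := J.hasDerivAt_jacobiAm x
    refine ((((J.hasDerivAt_sn x).sub ham.sin).pow 2).add
      (((J.hasDerivAt_cn x).sub ham.cos).pow 2)).congr_deriv ?_
    simp only [Pi.sub_apply]
    push_cast
    ring
  have h := eq_of_forall_hasDerivAt_zero hconst x 0
  simp only [jacobiAm_zero, J.sn_zero, J.cn_zero, Real.sin_zero, Real.cos_zero, sub_self] at h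
  constructor <;>
    nlinarith [sq_nonneg (sn x - Real.sin (jacobiAm dn x)),
      sq_nonneg (cn x - Real.cos (jacobiAm dn x))]

theorem sn_eq_sin_jacobiAm (J : IsJacobiTriple k sn cn dn) (x : ℝ) :
    sn x = Real.sin (jacobiAm dn x) :=
  (J.sn_eq_sin_and_cn_eq_cos x).1

theorem cn_eq_cos_jacobiAm (J : IsJacobiTriple k sn cn dn) (x : ℝ) :
    cn x = Real.cos (jacobiAm dn x) :=
  (J.sn_eq_sin_and_cn_eq_cos x).2

theorem dn_eq_sqrt (J : IsJacobiTriple k sn cn dn) (x : ℝ) :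
    dn x = √(1 - k ^ 2 * Real.sin (jacobiAm dn x) ^ 2) := by
  rw [← J.sn_eq_sin_jacobiAm, ← J.dn_sq, Real.sqrt_sq (J.dn_pos x).le]

theorem ellipticF_jacobiAm (J : IsJacobiTriple k sn cn dn) (x : ℝ) :
    ellipticF k (jacobiAm dn x) = x := by
  have hconst : ∀ x, HasDerivAt (fun x => ellipticF k (jacobiAm dn x) - x) 0 x := by
    intro x
    refine (((hasDerivAt_ellipticF J.modulus_sq_lt_one (jacobiAm dn x)).comp x
      (J.hasDerivAt_jacobiAm x)).sub (hasDerivAt_id x)).congr_deriv ?_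
    rw [← J.dn_eq_sqrt, inv_mul_cancel₀ (J.dn_pos x).ne', sub_self]
  have h := eq_of_forall_hasDerivAt_zero hconst x 0
  rwa [jacobiAm_zero, ellipticF_zero, sub_self, sub_eq_zero] at h

theorem jacobiAm_ellipticF (J : IsJacobiTriple k sn cn dn) (θ : ℝ) :
    jacobiAm dn (ellipticF k θ) = θ :=
  (ellipticF_strictMono J.modulus_sq_lt_one).injective (J.ellipticF_jacobiAm _)

theorem unique {sn' cn' dn' : ℝ → ℝ} (J : IsJacobiTriple k sn cn dn)
    (J' : IsJacobiTriple k sn' cn' dn') : sn = sn' ∧ cn = cn' ∧ dn = dn' := by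
  have ham : ∀ x, jacobiAm dn x = jacobiAm dn' x := fun x => by
    rw [← J'.jacobiAm_ellipticF (jacobiAm dn x), J.ellipticF_jacobiAm]
  refine ⟨funext fun x => ?_, funext fun x => ?_, funext fun x => ?_⟩
  · rw [J.sn_eq_sin_jacobiAm, J'.sn_eq_sin_jacobiAm, ham]
  · rw [J.cn_eq_cos_jacobiAm, J'.cn_eq_cos_jacobiAm, ham]
  · rw [J.dn_eq_sqrt, J'.dn_eq_sqrt, ham]

theorem reflect (J : IsJacobiTriple k sn cn dn) :
    IsJacobiTriple k (fun x => -sn (-x)) (fun x => cn (-x)) (fun x => dn (-x)) where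
  modulus_pos := J.modulus_pos
  modulus_lt_one := J.modulus_lt_one
  hasDerivAt_sn x :=
    ((J.hasDerivAt_sn (-x)).comp x (hasDerivAt_neg x)).neg.congr_deriv (by ring)
  hasDerivAt_cn x :=
    ((J.hasDerivAt_cn (-x)).comp x (hasDerivAt_neg x)).congr_deriv (by ring)
  hasDerivAt_dn x :=
    ((J.hasDerivAt_dn (-x)).comp x (hasDerivAt_neg x)).congr_deriv (by ring)
  sn_zero := by simp [J.sn_zero]
  cn_zero := by simp [J.cn_zero]
  dn_zero := by simp [J.dn_zero]

theorem sn_neg (J : IsJacobiTriple k sn cn dn) (x : ℝ) : sn (-x) = -sn x := by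
  rw [congrFun (J.unique J.reflect).1 x, neg_neg]

theorem cn_neg (J : IsJacobiTriple k sn cn dn) (x : ℝ) : cn (-x) = cn x :=
  (congrFun (J.unique J.reflect).2.1 x).symm

theorem dn_neg (J : IsJacobiTriple k sn cn dn) (x : ℝ) : dn (-x) = dn x :=
  (congrFun (J.unique J.reflect).2.2 x).symm

theorem jacobiAm_Kcomp (J : IsJacobiTriple k sn cn dn) : jacobiAm dn (Kcomp k) = Real.pi / 2 :=
  J.jacobiAm_ellipticF _

theorem sn_Kcomp (J : IsJacobiTriple k sn cn dn) : sn (Kcomp k) = 1 := by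
  rw [J.sn_eq_sin_jacobiAm, J.jacobiAm_Kcomp, Real.sin_pi_div_two]

theorem jacobiAm_mem_Icc (J : IsJacobiTriple k sn cn dn) {x : ℝ}
    (hx : x ∈ Set.Icc 0 (Kcomp k)) : jacobiAm dn x ∈ Set.Icc 0 (Real.pi / 2) := by
  rw [← J.jacobiAm_Kcomp, ← jacobiAm_zero dn]
  exact ⟨J.jacobiAm_strictMono.monotone hx.1, J.jacobiAm_strictMono.monotone hx.2⟩

theorem jacobiAm_mem_Ioo (J : IsJacobiTriple k sn cn dn) {x : ℝ}
    (hx : x ∈ Set.Ioo 0 (Kcomp k)) : jacobiAm dn x ∈ Set.Ioo 0 (Real.pi / 2) := by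
  rw [← J.jacobiAm_Kcomp, ← jacobiAm_zero dn]
  exact ⟨J.jacobiAm_strictMono hx.1, J.jacobiAm_strictMono hx.2⟩

theorem sn_pos (J : IsJacobiTriple k sn cn dn) {x : ℝ} (hx : x ∈ Set.Ioo 0 (Kcomp k)) :
    0 < sn x := by
  obtain ⟨h0, h1⟩ := J.jacobiAm_mem_Ioo hx
  rw [J.sn_eq_sin_jacobiAm]
  exact Real.sin_pos_of_pos_of_lt_pi h0 (by linarith)

theorem cn_pos (J : IsJacobiTriple k sn cn dn) {x : ℝ} (hx : x ∈ Set.Ioo 0 (Kcomp k)) :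
    0 < cn x := by
  obtain ⟨h0, h1⟩ := J.jacobiAm_mem_Ioo hx
  rw [J.cn_eq_cos_jacobiAm]
  exact Real.cos_pos_of_mem_Ioo ⟨by linarith, h1⟩

theorem sn_sq_monotoneOn (J : IsJacobiTriple k sn cn dn) :
    MonotoneOn (fun x => sn x ^ 2) (Set.Icc 0 (Kcomp k)) := by
  intro x hx y hy hxy
  obtain ⟨hx0, hx1⟩ := J.jacobiAm_mem_Icc hx
  obtain ⟨-, hy1⟩ := J.jacobiAm_mem_Icc hy
  simp only [J.sn_eq_sin_jacobiAm]
  exact pow_le_pow_left₀ (Real.sin_nonneg_of_nonneg_of_le_pi hx0 (by linarith [Real.pi_pos]))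
    (Real.sin_le_sin_of_le_of_le_pi_div_two (by linarith) hy1
      (J.jacobiAm_strictMono.monotone hxy)) 2

theorem Ecomp_eq_integral_dn_sq (J : IsJacobiTriple k sn cn dn) :
    Ecomp k = ∫ t in (0 : ℝ)..Kcomp k, dn t ^ 2 := by
  have hsubst := intervalIntegral.integral_comp_mul_deriv
    (g := fun t => √(1 - k ^ 2 * Real.sin t ^ 2)) (a := 0) (b := Kcomp k)
    (fun x _ => J.hasDerivAt_jacobiAm x) J.continuous_dn.continuousOn (by fun_prop)
  rw [jacobiAm_zero, J.jacobiAm_Kcomp] at hsubst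
  rw [Ecomp, ← hsubst]
  simp only [Function.comp_apply, ← J.dn_eq_sqrt]
  simp only [pow_two]

end IsJacobiTriple

/-! ### Addition theorems -/

namespace IsJacobiTriple

variable {k : ℝ} {sn cn dn : ℝ → ℝ}

theorem hasDerivAt_sn_const_sub (J : IsJacobiTriple k sn cn dn) (w x : ℝ) :
    HasDerivAt (fun x => sn (w - x)) (-(cn (w - x) * dn (w - x))) x :=
  HasDerivAt.comp_const_sub w x (J.hasDerivAt_sn (w - x))

theorem hasDerivAt_cn_const_sub (J : IsJacobiTriple k sn cn dn) (w x : ℝ) :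
    HasDerivAt (fun x => cn (w - x)) (sn (w - x) * dn (w - x)) x := by
  simpa using HasDerivAt.comp_const_sub w x (J.hasDerivAt_cn (w - x))

theorem hasDerivAt_dn_const_sub (J : IsJacobiTriple k sn cn dn) (w x : ℝ) :
    HasDerivAt (fun x => dn (w - x)) (k ^ 2 * sn (w - x) * cn (w - x)) x := by
  simpa using HasDerivAt.comp_const_sub w x (J.hasDerivAt_dn (w - x))

theorem hasDerivAt_one_sub_sq_mul_sn_sq (J : IsJacobiTriple k sn cn dn) (w x : ℝ) :
    HasDerivAt (fun x => 1 - k ^ 2 * sn x ^ 2 * sn (w - x) ^ 2)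
      (-(2 * k ^ 2 * sn x * sn (w - x) *
        (cn x * dn x * sn (w - x) - sn x * (cn (w - x) * dn (w - x))))) x := by
  refine (((((J.hasDerivAt_sn x).pow 2).const_mul (k ^ 2)).mul
    ((J.hasDerivAt_sn_const_sub w x).pow 2)).const_sub 1).congr_deriv ?_
  simp only [Pi.pow_apply]
  push_cast
  ring

/- Each addition theorem says that a quotient in `x` and `w - x` does not depend on `x`; it is then
evaluated at `x = 0`. -/
theorem sn_eq_of_sub (J : IsJacobiTriple k sn cn dn) (w x : ℝ) :
    (sn x * cn (w - x) * dn (w - x) + sn (w - x) * cn x * dn x) /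
      (1 - k ^ 2 * sn x ^ 2 * sn (w - x) ^ 2) = sn w := by
  have hconst := div_eq_div_of_wronskian_eq_zero
    (fun x => (((J.hasDerivAt_sn x).mul (J.hasDerivAt_cn_const_sub w x)).mul
      (J.hasDerivAt_dn_const_sub w x)).add
      (((J.hasDerivAt_sn_const_sub w x).mul (J.hasDerivAt_cn x)).mul (J.hasDerivAt_dn x)))
    (J.hasDerivAt_one_sub_sq_mul_sn_sq w) (fun x => (J.one_sub_sq_mul_sn_sq_pos x (w - x)).ne')
    (fun x => ?_) x 0
  · simpa [J.sn_zero, J.cn_zero, J.dn_zero] using hconst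
  · simp only [Pi.add_apply, Pi.mul_apply]
    grind [J.cn_sq x, J.dn_sq x, J.cn_sq (w - x), J.dn_sq (w - x)]

theorem cn_eq_of_sub (J : IsJacobiTriple k sn cn dn) (w x : ℝ) :
    (cn x * cn (w - x) - sn x * sn (w - x) * dn x * dn (w - x)) /
      (1 - k ^ 2 * sn x ^ 2 * sn (w - x) ^ 2) = cn w := by
  have hconst := div_eq_div_of_wronskian_eq_zero
    (fun x => ((J.hasDerivAt_cn x).mul (J.hasDerivAt_cn_const_sub w x)).sub
      ((((J.hasDerivAt_sn x).mul (J.hasDerivAt_sn_const_sub w x)).mul (J.hasDerivAt_dn x)).mul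
        (J.hasDerivAt_dn_const_sub w x)))
    (J.hasDerivAt_one_sub_sq_mul_sn_sq w) (fun x => (J.one_sub_sq_mul_sn_sq_pos x (w - x)).ne')
    (fun x => ?_) x 0
  · simpa [J.sn_zero, J.cn_zero, J.dn_zero] using hconst
  · simp only [Pi.sub_apply, Pi.mul_apply]
    grind [J.cn_sq x, J.dn_sq x, J.cn_sq (w - x), J.dn_sq (w - x)]

theorem dn_eq_of_sub (J : IsJacobiTriple k sn cn dn) (w x : ℝ) :
    (dn x * dn (w - x) - k ^ 2 * sn x * sn (w - x) * cn x * cn (w - x)) /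
      (1 - k ^ 2 * sn x ^ 2 * sn (w - x) ^ 2) = dn w := by
  have hconst := div_eq_div_of_wronskian_eq_zero
    (fun x => ((J.hasDerivAt_dn x).mul (J.hasDerivAt_dn_const_sub w x)).sub
      (((((J.hasDerivAt_sn x).const_mul (k ^ 2)).mul (J.hasDerivAt_sn_const_sub w x)).mul
        (J.hasDerivAt_cn x)).mul (J.hasDerivAt_cn_const_sub w x)))
    (J.hasDerivAt_one_sub_sq_mul_sn_sq w) (fun x => (J.one_sub_sq_mul_sn_sq_pos x (w - x)).ne')
    (fun x => ?_) x 0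
  · simpa [J.sn_zero, J.cn_zero, J.dn_zero] using hconst
  · simp only [Pi.sub_apply, Pi.mul_apply]
    grind [J.cn_sq x, J.dn_sq x, J.cn_sq (w - x), J.dn_sq (w - x)]

theorem sn_add (J : IsJacobiTriple k sn cn dn) (x y : ℝ) :
    sn (x + y) = (sn x * (cn y * dn y) + sn y * (cn x * dn x)) /
      (1 - k ^ 2 * sn x ^ 2 * sn y ^ 2) := by
  simpa [mul_assoc] using (J.sn_eq_of_sub (x + y) x).symm

theorem cn_add (J : IsJacobiTriple k sn cn dn) (x y : ℝ) :
    cn (x + y) = (cn x * cn y - sn x * sn y * dn x * dn y) /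
      (1 - k ^ 2 * sn x ^ 2 * sn y ^ 2) := by
  simpa using (J.cn_eq_of_sub (x + y) x).symm

theorem dn_add (J : IsJacobiTriple k sn cn dn) (x y : ℝ) :
    dn (x + y) = (dn x * dn y - k ^ 2 * sn x * sn y * cn x * cn y) /
      (1 - k ^ 2 * sn x ^ 2 * sn y ^ 2) := by
  simpa using (J.dn_eq_of_sub (x + y) x).symm

theorem sn_sub (J : IsJacobiTriple k sn cn dn) (x y : ℝ) :
    sn (x - y) = (sn x * (cn y * dn y) - sn y * (cn x * dn x)) /
      (1 - k ^ 2 * sn x ^ 2 * sn y ^ 2) := by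
  rw [sub_eq_add_neg, J.sn_add, J.sn_neg, J.cn_neg, J.dn_neg]
  ring

theorem cn_mul_dn_add (J : IsJacobiTriple k sn cn dn) (x y : ℝ) :
    cn (x + y) * dn (x + y) =
      (cn x * dn x * (cn y * dn y) * (1 + k ^ 2 * sn x ^ 2 * sn y ^ 2) +
        sn y * sn x * ((-(1 + k ^ 2) + 2 * k ^ 2 * sn x ^ 2) *
          (1 - k ^ 2 * sn x ^ 2 * sn y ^ 2) +
          2 * k ^ 2 * sn y ^ 2 * ((1 - sn x ^ 2) * (1 - k ^ 2 * sn x ^ 2)))) /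
        (1 - k ^ 2 * sn x ^ 2 * sn y ^ 2) ^ 2 := by
  rw [J.cn_add, J.dn_add, div_mul_div_comm, ← sq]
  congr 1
  have hexpand :
      (cn x * cn y - sn x * sn y * dn x * dn y) *
          (dn x * dn y - k ^ 2 * sn x * sn y * cn x * cn y) =
        cn x * dn x * (cn y * dn y) * (1 + k ^ 2 * sn x ^ 2 * sn y ^ 2) -
          sn x * sn y * (dn x ^ 2 * dn y ^ 2 + k ^ 2 * (cn x ^ 2 * cn y ^ 2)) := by
    ring
  rw [hexpand, J.cn_sq, J.cn_sq, J.dn_sq, J.dn_sq]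
  ring

theorem cn_mul_dn_sub (J : IsJacobiTriple k sn cn dn) (x y : ℝ) :
    cn (x - y) * dn (x - y) =
      (cn x * dn x * (cn y * dn y) * (1 + k ^ 2 * sn x ^ 2 * sn y ^ 2) -
        sn y * sn x * ((-(1 + k ^ 2) + 2 * k ^ 2 * sn x ^ 2) *
          (1 - k ^ 2 * sn x ^ 2 * sn y ^ 2) +
          2 * k ^ 2 * sn y ^ 2 * ((1 - sn x ^ 2) * (1 - k ^ 2 * sn x ^ 2)))) /
        (1 - k ^ 2 * sn x ^ 2 * sn y ^ 2) ^ 2 := by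
  rw [sub_eq_add_neg, J.cn_mul_dn_add, J.sn_neg, J.cn_neg, J.dn_neg]
  ring

theorem sn_sq_sub_sn_sq (J : IsJacobiTriple k sn cn dn) (x y : ℝ) :
    sn x ^ 2 - sn y ^ 2 =
      sn (x - y) * (sn x * (cn y * dn y) + sn y * (cn x * dn x)) := by
  rw [J.sn_sub, div_mul_eq_mul_div, eq_div_iff (J.one_sub_sq_mul_sn_sq_pos x y).ne']
  linear_combination (-sn x ^ 2) * J.cn_mul_dn_sq y + sn y ^ 2 * J.cn_mul_dn_sq x

theorem sn_two_mul (J : IsJacobiTriple k sn cn dn) (x : ℝ) :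
    sn (2 * x) = 2 * sn x * (cn x * dn x) / ((1 + k * sn x ^ 2) * (1 - k * sn x ^ 2)) := by
  rw [two_mul, J.sn_add]
  ring_nf

theorem dn_add_modulus_mul_cn_two_mul (J : IsJacobiTriple k sn cn dn) (x : ℝ) :
    dn (2 * x) + k * cn (2 * x) = (1 + k) * (1 - k * sn x ^ 2) / (1 + k * sn x ^ 2) := by
  have hminus := (J.one_sub_mul_sn_sq_pos x).ne'
  have hplus := (J.one_add_mul_sn_sq_pos x).ne'
  have hden : 1 - k ^ 2 * sn x ^ 2 * sn x ^ 2 = (1 + k * sn x ^ 2) * (1 - k * sn x ^ 2) := by ring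
  rw [two_mul, J.cn_add, J.dn_add, hden]
  field_simp
  linear_combination (k - k ^ 2 * sn x ^ 2) * J.cn_sq x + (1 - k * sn x ^ 2) * J.dn_sq x

theorem cn_mul_dn_two_mul (J : IsJacobiTriple k sn cn dn) (x : ℝ) :
    1 + k ^ 2 + 2 * k * (cn (2 * x) * dn (2 * x)) - 2 * k ^ 2 * sn (2 * x) ^ 2 =
      ((1 + k) * (1 - k * sn x ^ 2) / (1 + k * sn x ^ 2)) ^ 2 := by
  rw [← J.dn_add_modulus_mul_cn_two_mul]
  linear_combination -k ^ 2 * J.cn_sq (2 * x) - J.dn_sq (2 * x)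

/-! ### The Jacobi zeta function -/

theorem hasDerivAt_Zjac (J : IsJacobiTriple k sn cn dn) (x : ℝ) :
    HasDerivAt (Zjac k dn) (1 - k ^ 2 * sn x ^ 2 - Ecomp k / Kcomp k) x := by
  refine (((J.continuous_dn.pow 2).integral_hasStrictDerivAt 0 x).hasDerivAt.sub
    ((hasDerivAt_id x).const_mul (Ecomp k / Kcomp k))).congr_deriv ?_
  rw [mul_one, Pi.pow_apply, J.dn_sq]

theorem Zjac_zero (k : ℝ) (dn : ℝ → ℝ) : Zjac k dn 0 = 0 := by simp [Zjac]

theorem Zjac_Kcomp (J : IsJacobiTriple k sn cn dn) : Zjac k dn (Kcomp k) = 0 := by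
  rw [Zjac, ← J.Ecomp_eq_integral_dn_sq, div_mul_cancel₀ _ (Kcomp_pos J.modulus_sq_lt_one).ne',
    sub_self]

theorem Zjac_concaveOn (J : IsJacobiTriple k sn cn dn) :
    ConcaveOn ℝ (Set.Icc 0 (Kcomp k)) (Zjac k dn) := by
  have hdiff : Differentiable ℝ (Zjac k dn) := fun x => (J.hasDerivAt_Zjac x).differentiableAt
  refine AntitoneOn.concaveOn_of_deriv (convex_Icc 0 (Kcomp k)) hdiff.continuous.continuousOn
    hdiff.differentiableOn fun x hx y hy hxy => ?_
  rw [(J.hasDerivAt_Zjac x).deriv, (J.hasDerivAt_Zjac y).deriv]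
  have hsn : sn x ^ 2 ≤ sn y ^ 2 :=
    J.sn_sq_monotoneOn (interior_subset hx) (interior_subset hy) hxy
  linarith [mul_le_mul_of_nonneg_left hsn (sq_nonneg k)]

theorem Zjac_nonneg (J : IsJacobiTriple k sn cn dn) {x : ℝ} (hx : x ∈ Set.Icc 0 (Kcomp k)) :
    0 ≤ Zjac k dn x := by
  have hK := (Kcomp_pos J.modulus_sq_lt_one).le
  have hmin := J.Zjac_concaveOn.min_le_of_mem_Icc (Set.left_mem_Icc.2 hK)
    (Set.right_mem_Icc.2 hK) hx
  rwa [Zjac_zero, J.Zjac_Kcomp, min_self] at hmin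

theorem Zjac_add (J : IsJacobiTriple k sn cn dn) (x y : ℝ) :
    Zjac k dn (x + y) = Zjac k dn x + Zjac k dn y - k ^ 2 * sn x * sn y * sn (x + y) := by
  have hconst : ∀ x, HasDerivAt (fun x => Zjac k dn (x + y) -
      (Zjac k dn x + Zjac k dn y - k ^ 2 * sn x * sn y * sn (x + y))) 0 x := by
    intro x
    refine (((J.hasDerivAt_Zjac (x + y)).comp_add_const x y).sub
      (((J.hasDerivAt_Zjac x).add_const _).sub
        ((((J.hasDerivAt_sn x).const_mul (k ^ 2)).mul_const (sn y)).mul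
          ((J.hasDerivAt_sn (x + y)).comp_add_const x y)))).congr_deriv ?_
    have hsn := J.sn_sq_sub_sn_sq (x + y) x
    rw [add_sub_cancel_left] at hsn
    linear_combination (-k ^ 2) * hsn
  have h := eq_of_forall_hasDerivAt_zero hconst x 0
  simp only [zero_add, J.sn_zero, Zjac_zero, mul_zero, zero_mul, sub_zero, sub_self] at h
  linarith

theorem Zjac_neg (J : IsJacobiTriple k sn cn dn) (x : ℝ) : Zjac k dn (-x) = -Zjac k dn x := by
  have h := J.Zjac_add x (-x)
  rw [add_neg_cancel, Zjac_zero, J.sn_zero, mul_zero, sub_zero] at h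
  linarith

theorem Zjac_add_sub_Zjac_sub (J : IsJacobiTriple k sn cn dn) (x y : ℝ) :
    Zjac k dn (x + y) - Zjac k dn (x - y) =
      2 * Zjac k dn y -
        2 * k ^ 2 * sn x ^ 2 * sn y * (cn y * dn y) / (1 - k ^ 2 * sn x ^ 2 * sn y ^ 2) := by
  have hsub := J.Zjac_add x (-y)
  rw [← sub_eq_add_neg, J.Zjac_neg, J.sn_neg] at hsub
  rw [J.Zjac_add, hsub, J.sn_add, J.sn_sub]
  ring

theorem kapWidth_pos (J : IsJacobiTriple k sn cn dn) {x : ℝ} (hx : x ∈ Set.Ioo 0 (Kcomp k)) :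
    0 < kapWidth k sn cn dn x := by
  have hZ := J.Zjac_nonneg (Set.Ioo_subset_Icc_self hx)
  have hs := J.sn_pos hx
  have hc := J.cn_pos hx
  have hd := J.dn_pos x
  have hk := J.modulus_pos
  unfold kapWidth
  positivity

end IsJacobiTriple

/-! ### Theta functions with characteristics -/

/-- The theta function `∑ₙ exp (-π a (n + ε)² + 2 i (n + ε) z)` with real characteristic `ε` and
purely imaginary period `τ = i a`, expressed through Mathlib's two-variable theta function. -/
def thetaChar (ε a : ℝ) (z : ℂ) : ℂ :=
  Complex.exp (-Real.pi * a * ε ^ 2 + 2 * Complex.I * ε * z) *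
    jacobiTheta₂ (z / Real.pi + Complex.I * a * ε) (Complex.I * a)

/-- The general term of the series of `thetaChar`. -/
def thetaCharTerm (ε a : ℝ) (z : ℂ) (n : ℤ) : ℂ :=
  Complex.exp (-Real.pi * a * (n + ε) ^ 2 + 2 * Complex.I * (n + ε) * z)

theorem ofReal_pi_ne_zero : (Real.pi : ℂ) ≠ 0 := Complex.ofReal_ne_zero.2 Real.pi_ne_zero

section ThetaChar

variable {a : ℝ}

theorem hasSum_thetaCharTerm (ε : ℝ) (ha : 0 < a) (z : ℂ) :
    HasSum (thetaCharTerm ε a z) (thetaChar ε a z) := by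
  have hsum := (hasSum_jacobiTheta₂_term (z / Real.pi + Complex.I * a * ε)
    (τ := Complex.I * a) (by simpa using ha)).mul_left
    (Complex.exp (-Real.pi * a * ε ^ 2 + 2 * Complex.I * ε * z))
  refine hsum.congr_fun fun n => ?_
  rw [thetaCharTerm, jacobiTheta₂_term, ← Complex.exp_add]
  congr 1
  have hpi := ofReal_pi_ne_zero
  field_simp
  linear_combination (-Real.pi * a * n * (n + 2 * ε) : ℂ) * Complex.I_sq

theorem differentiable_thetaChar (ε : ℝ) (ha : 0 < a) : Differentiable ℂ (thetaChar ε a) := by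
  intro z
  refine DifferentiableAt.mul (by fun_prop) ?_
  exact (differentiableAt_jacobiTheta₂_fst (z / Real.pi + Complex.I * a * ε)
    (τ := Complex.I * a) (by simpa using ha)).comp z
      (f := fun z : ℂ => z / Real.pi + Complex.I * a * ε) (by fun_prop)

theorem contDiff_thetaChar (ε : ℝ) (ha : 0 < a) :
    ContDiff ℝ (⊤ : ℕ∞) fun y : ℝ => thetaChar ε a y :=
  ((differentiable_thetaChar ε ha).contDiff.restrict_scalars ℝ).comp Complex.ofRealCLM.contDiff

theorem contDiff_re_thetaChar (ε : ℝ) (ha : 0 < a) :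
    ContDiff ℝ (⊤ : ℕ∞) fun y : ℝ => (thetaChar ε a y).re :=
  Complex.reCLM.contDiff.comp (contDiff_thetaChar ε ha)

theorem contDiff_im_thetaChar (ε : ℝ) (ha : 0 < a) :
    ContDiff ℝ (⊤ : ℕ∞) fun y : ℝ => (thetaChar ε a y).im :=
  Complex.imCLM.contDiff.comp (contDiff_thetaChar ε ha)

/-- The bijection sending `(j, l)` to the pair `(j + l, j - l)` of equal parities or to the pair
`(j + l + 1, j - l)` of opposite parities; it rearranges a product of two theta series. -/
def intProdParityEquiv : (ℤ × ℤ) ⊕ (ℤ × ℤ) ≃ ℤ × ℤ where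
  toFun := Sum.elim (fun p => (p.1 + p.2, p.1 - p.2)) (fun p => (p.1 + p.2 + 1, p.1 - p.2))
  invFun q :=
    if (q.1 + q.2) % 2 = 0 then Sum.inl ((q.1 + q.2) / 2, (q.1 - q.2) / 2)
    else Sum.inr ((q.1 + q.2 - 1) / 2, (q.1 - q.2 - 1) / 2)
  left_inv := by
    rintro (⟨j, l⟩ | ⟨j, l⟩)
    · have heven : (j + l + (j - l)) % 2 = 0 := by omega
      simp only [Sum.elim_inl, heven, if_true]
      congr 2 <;> omega
    · have hodd : ¬ (j + l + 1 + (j - l)) % 2 = 0 := by omega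
      simp only [Sum.elim_inr, hodd, if_false]
      congr 2 <;> omega
  right_inv := by
    rintro ⟨m, n⟩
    by_cases h : (m + n) % 2 = 0
    · simp only [h, if_true, Sum.elim_inl]
      ext <;> simp only <;> omega
    · simp only [h, if_false, Sum.elim_inr]
      ext <;> simp only <;> omega

theorem hasSum_thetaCharTerm_mul (ε₁ ε₂ : ℝ) (ha : 0 < a) (x y : ℂ) :
    HasSum (fun p : ℤ × ℤ => thetaCharTerm ε₁ a x p.1 * thetaCharTerm ε₂ a y p.2)
      (thetaChar ε₁ a x * thetaChar ε₂ a y) :=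
  have hx := hasSum_thetaCharTerm ε₁ ha x
  have hy := hasSum_thetaCharTerm ε₂ ha y
  hx.mul hy (summable_mul_of_summable_norm hx.summable.norm hy.summable.norm)

theorem thetaChar_add_mul_thetaChar_sub (ε₁ ε₂ : ℝ) (ha : 0 < a) (x y : ℂ) :
    thetaChar ε₁ a (x + y) * thetaChar ε₂ a (x - y) =
      thetaChar ((ε₁ + ε₂) / 2) (2 * a) (2 * x) * thetaChar ((ε₁ - ε₂) / 2) (2 * a) (2 * y) +
      thetaChar ((ε₁ + ε₂ + 1) / 2) (2 * a) (2 * x) *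
        thetaChar ((ε₁ - ε₂ + 1) / 2) (2 * a) (2 * y) := by
  have ha2 : 0 < 2 * a := by positivity
  refine (intProdParityEquiv.hasSum_iff.2
    (hasSum_thetaCharTerm_mul ε₁ ε₂ ha (x + y) (x - y))).unique (HasSum.sum ?_ ?_)
  · refine (hasSum_thetaCharTerm_mul ((ε₁ + ε₂) / 2) ((ε₁ - ε₂) / 2) ha2
      (2 * x) (2 * y)).congr_fun fun p => ?_
    simp only [Function.comp, intProdParityEquiv, Equiv.coe_fn_mk, Sum.elim_inl, thetaCharTerm,
      ← Complex.exp_add]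
    congr 1
    push_cast
    ring
  · refine (hasSum_thetaCharTerm_mul ((ε₁ + ε₂ + 1) / 2) ((ε₁ - ε₂ + 1) / 2) ha2
      (2 * x) (2 * y)).congr_fun fun p => ?_
    simp only [Function.comp, intProdParityEquiv, Equiv.coe_fn_mk, Sum.elim_inr, thetaCharTerm,
      ← Complex.exp_add]
    congr 1
    push_cast
    ring

theorem thetaChar_add_one (ε : ℝ) (ha : 0 < a) (z : ℂ) :
    thetaChar (ε + 1) a z = thetaChar ε a z := by
  have hshift := (Equiv.addRight (1 : ℤ)).hasSum_iff.2 (hasSum_thetaCharTerm ε ha z)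
  refine (hasSum_thetaCharTerm (ε + 1) ha z).unique (hshift.congr_fun fun n => ?_)
  simp only [Function.comp, thetaCharTerm, Equiv.coe_addRight]
  congr 1
  push_cast
  ring

theorem thetaChar_neg_neg (ε : ℝ) (ha : 0 < a) (z : ℂ) :
    thetaChar (-ε) a (-z) = thetaChar ε a z := by
  have hneg := (Equiv.neg ℤ).hasSum_iff.2 (hasSum_thetaCharTerm ε ha z)
  refine (hasSum_thetaCharTerm (-ε) ha (-z)).unique (hneg.congr_fun fun n => ?_)
  simp only [Function.comp, thetaCharTerm, Equiv.neg_apply]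
  congr 1
  push_cast
  ring

theorem thetaChar_add_pi (ε : ℝ) (ha : 0 < a) (z : ℂ) :
    thetaChar ε a (z + Real.pi) =
      Complex.exp (2 * Real.pi * Complex.I * ε) * thetaChar ε a z := by
  have hmul := (hasSum_thetaCharTerm ε ha z).mul_left (Complex.exp (2 * Real.pi * Complex.I * ε))
  refine (hasSum_thetaCharTerm ε ha _).unique (hmul.congr_fun fun n => ?_)
  simp only [thetaCharTerm, ← Complex.exp_add]
  rw [Complex.exp_eq_exp_iff_exists_int]
  exact ⟨n, by ring⟩

theorem conj_thetaChar (ε : ℝ) (ha : 0 < a) (y : ℝ) :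
    starRingEnd ℂ (thetaChar ε a y) = thetaChar ε a (-y) := by
  refine (Complex.hasSum_conj'.2 (hasSum_thetaCharTerm ε ha y)).unique
    ((hasSum_thetaCharTerm ε ha (-y)).congr_fun fun n => ?_)
  simp [thetaCharTerm, ← Complex.exp_conj, Complex.conj_ofNat]

theorem thetaChar_zero_neg (ha : 0 < a) (z : ℂ) : thetaChar 0 a (-z) = thetaChar 0 a z := by
  simpa using thetaChar_neg_neg 0 ha z

theorem thetaChar_half_neg (ha : 0 < a) (z : ℂ) :
    thetaChar (1 / 2) a (-z) = thetaChar (1 / 2) a z := by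
  rw [← thetaChar_neg_neg _ ha, ← thetaChar_add_one _ ha]
  norm_num

theorem thetaChar_three_quarters (ha : 0 < a) (y : ℝ) :
    thetaChar (3 / 4) a y = starRingEnd ℂ (thetaChar (1 / 4) a y) := by
  rw [conj_thetaChar _ ha, ← thetaChar_neg_neg _ ha, ← thetaChar_add_one (-(3 / 4)) ha]
  norm_num

theorem thetaChar_quarter_sub_pi (ha : 0 < a) (y : ℝ) :
    thetaChar (1 / 4) a ((y - Real.pi : ℝ) : ℂ) = -Complex.I * thetaChar (1 / 4) a y := by
  have hexp : Complex.exp (2 * Real.pi * Complex.I * ((1 / 4 : ℝ) : ℂ)) = Complex.I := by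
    rw [show 2 * Real.pi * Complex.I * ((1 / 4 : ℝ) : ℂ) = Real.pi / 2 * Complex.I by
      push_cast; ring, Complex.exp_pi_div_two_mul_I]
  have h := thetaChar_add_pi (1 / 4) ha ((y - Real.pi : ℝ) : ℂ)
  rw [hexp, ← Complex.ofReal_add, sub_add_cancel] at h
  rw [h, ← mul_assoc, neg_mul, Complex.I_mul_I, neg_neg, one_mul]

end ThetaChar

/-! ### The four real theta functions -/

/-- Jacobi's `θ₃` at real argument `y` and nome `exp (-π a)`. -/
def theta₃ (a y : ℝ) : ℝ := (thetaChar 0 a y).re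

/-- Jacobi's `θ₂` at real argument `y` and nome `exp (-π a)`. -/
def theta₂ (a y : ℝ) : ℝ := (thetaChar (1 / 2) a y).re

/-- Jacobi's `θ₄` at real argument `y` and nome `exp (-π a)`. -/
def theta₄ (a y : ℝ) : ℝ := theta₃ a (y + Real.pi / 2)

/-- Jacobi's `θ₁` at real argument `y` and nome `exp (-π a)`. -/
def theta₁ (a y : ℝ) : ℝ := theta₂ a (y - Real.pi / 2)

section RealTheta

variable {a : ℝ}

theorem contDiff_theta₃ (ha : 0 < a) : ContDiff ℝ (⊤ : ℕ∞) (theta₃ a) :=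
  contDiff_re_thetaChar 0 ha

theorem contDiff_theta₂ (ha : 0 < a) : ContDiff ℝ (⊤ : ℕ∞) (theta₂ a) :=
  contDiff_re_thetaChar (1 / 2) ha

theorem contDiff_theta₄ (ha : 0 < a) : ContDiff ℝ (⊤ : ℕ∞) (theta₄ a) :=
  (contDiff_theta₃ ha).comp (by fun_prop)

theorem contDiff_theta₁ (ha : 0 < a) : ContDiff ℝ (⊤ : ℕ∞) (theta₁ a) :=
  (contDiff_theta₂ ha).comp (by fun_prop)

theorem hasDerivAt_theta₃ (ha : 0 < a) (y : ℝ) :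
    HasDerivAt (theta₃ a) (deriv (theta₃ a) y) y :=
  ((contDiff_theta₃ ha).differentiable (by simp) y).hasDerivAt

theorem hasDerivAt_theta₂ (ha : 0 < a) (y : ℝ) :
    HasDerivAt (theta₂ a) (deriv (theta₂ a) y) y :=
  ((contDiff_theta₂ ha).differentiable (by simp) y).hasDerivAt

theorem hasDerivAt_theta₄ (ha : 0 < a) (y : ℝ) :
    HasDerivAt (theta₄ a) (deriv (theta₄ a) y) y :=
  ((contDiff_theta₄ ha).differentiable (by simp) y).hasDerivAt

theorem hasDerivAt_theta₁ (ha : 0 < a) (y : ℝ) :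
    HasDerivAt (theta₁ a) (deriv (theta₁ a) y) y :=
  ((contDiff_theta₁ ha).differentiable (by simp) y).hasDerivAt

theorem ofReal_theta₃ (ha : 0 < a) (y : ℝ) : (theta₃ a y : ℂ) = thetaChar 0 a y := by
  rw [theta₃, ← Complex.conj_eq_iff_re, conj_thetaChar 0 ha, thetaChar_zero_neg ha]

theorem ofReal_theta₂ (ha : 0 < a) (y : ℝ) : (theta₂ a y : ℂ) = thetaChar (1 / 2) a y := by
  rw [theta₂, ← Complex.conj_eq_iff_re, conj_thetaChar _ ha, thetaChar_half_neg ha]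

theorem theta₃_neg (ha : 0 < a) (y : ℝ) : theta₃ a (-y) = theta₃ a y := by
  rw [theta₃, theta₃, Complex.ofReal_neg, thetaChar_zero_neg ha]

theorem theta₂_neg (ha : 0 < a) (y : ℝ) : theta₂ a (-y) = theta₂ a y := by
  rw [theta₂, theta₂, Complex.ofReal_neg, thetaChar_half_neg ha]

theorem theta₃_add_pi (ha : 0 < a) (y : ℝ) : theta₃ a (y + Real.pi) = theta₃ a y := by
  rw [theta₃, theta₃, Complex.ofReal_add, thetaChar_add_pi 0 ha]
  simp

theorem theta₂_add_pi (ha : 0 < a) (y : ℝ) : theta₂ a (y + Real.pi) = -theta₂ a y := by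
  have hexp : Complex.exp (2 * Real.pi * Complex.I * ((1 / 2 : ℝ) : ℂ)) = -1 := by
    rw [← Complex.exp_pi_mul_I]
    congr 1
    push_cast
    ring
  rw [theta₂, theta₂, Complex.ofReal_add, thetaChar_add_pi _ ha, hexp, neg_one_mul, Complex.neg_re]

theorem theta₄_neg (ha : 0 < a) (y : ℝ) : theta₄ a (-y) = theta₄ a y := by
  rw [theta₄, theta₄, ← theta₃_neg ha, ← theta₃_add_pi ha]
  ring_nf

theorem theta₁_neg (ha : 0 < a) (y : ℝ) : theta₁ a (-y) = -theta₁ a y := by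
  rw [theta₁, theta₁, ← theta₂_neg ha, ← theta₂_add_pi ha]
  ring_nf

theorem theta₁_zero (ha : 0 < a) : theta₁ a 0 = 0 := by
  have h := theta₁_neg ha 0
  rw [neg_zero] at h
  linarith

theorem theta₁_pi_div_two (a : ℝ) : theta₁ a (Real.pi / 2) = theta₂ a 0 := by
  rw [theta₁, sub_self]

theorem theta₁_pi_sub (ha : 0 < a) (y : ℝ) : theta₁ a (Real.pi - y) = theta₁ a y := by
  rw [theta₁, theta₁, ← theta₂_neg ha]
  congr 1
  ring

theorem theta₃_add_mul_theta₃_sub (ha : 0 < a) (x y : ℝ) :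
    theta₃ a (x + y) * theta₃ a (x - y) =
      theta₃ (2 * a) (2 * x) * theta₃ (2 * a) (2 * y) +
        theta₂ (2 * a) (2 * x) * theta₂ (2 * a) (2 * y) := by
  have ha2 : 0 < 2 * a := by positivity
  have h := thetaChar_add_mul_thetaChar_sub 0 0 ha x y
  rw [← Complex.ofReal_inj]
  push_cast [ofReal_theta₃ ha, ofReal_theta₃ ha2, ofReal_theta₂ ha2]
  norm_num at h ⊢
  exact h

theorem theta₂_add_mul_theta₂_sub (ha : 0 < a) (x y : ℝ) :
    theta₂ a (x + y) * theta₂ a (x - y) =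
      theta₂ (2 * a) (2 * x) * theta₃ (2 * a) (2 * y) +
        theta₃ (2 * a) (2 * x) * theta₂ (2 * a) (2 * y) := by
  have ha2 : 0 < 2 * a := by positivity
  have h := thetaChar_add_mul_thetaChar_sub (1 / 2) (1 / 2) ha x y
  have hone := thetaChar_add_one 0 ha2 (2 * x)
  rw [← Complex.ofReal_inj]
  push_cast [ofReal_theta₂ ha, ofReal_theta₃ ha2, ofReal_theta₂ ha2]
  norm_num at h hone ⊢
  rw [h, hone]

theorem theta₄_add_mul_theta₄_sub (ha : 0 < a) (x y : ℝ) :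
    theta₄ a (x + y) * theta₄ a (x - y) =
      theta₃ (2 * a) (2 * x) * theta₃ (2 * a) (2 * y) -
        theta₂ (2 * a) (2 * x) * theta₂ (2 * a) (2 * y) := by
  have ha2 : 0 < 2 * a := by positivity
  have h := theta₃_add_mul_theta₃_sub ha (x + Real.pi / 2) y
  rw [show 2 * (x + Real.pi / 2) = 2 * x + Real.pi by ring, theta₃_add_pi ha2,
    theta₂_add_pi ha2] at h
  rw [theta₄, theta₄, add_right_comm, sub_add_eq_add_sub, h]
  ring

theorem theta₃_sq (ha : 0 < a) (x : ℝ) :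
    theta₃ a x ^ 2 =
      theta₃ (2 * a) (2 * x) * theta₃ (2 * a) 0 + theta₂ (2 * a) (2 * x) * theta₂ (2 * a) 0 := by
  simpa [sq] using theta₃_add_mul_theta₃_sub ha x 0

theorem theta₂_sq (ha : 0 < a) (x : ℝ) :
    theta₂ a x ^ 2 =
      theta₂ (2 * a) (2 * x) * theta₃ (2 * a) 0 + theta₃ (2 * a) (2 * x) * theta₂ (2 * a) 0 := by
  simpa [sq] using theta₂_add_mul_theta₂_sub ha x 0

theorem theta₄_sq (ha : 0 < a) (x : ℝ) :
    theta₄ a x ^ 2 =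
      theta₃ (2 * a) (2 * x) * theta₃ (2 * a) 0 - theta₂ (2 * a) (2 * x) * theta₂ (2 * a) 0 := by
  simpa [sq] using theta₄_add_mul_theta₄_sub ha x 0

theorem theta₁_sq (ha : 0 < a) (x : ℝ) :
    theta₁ a x ^ 2 =
      theta₃ (2 * a) (2 * x) * theta₂ (2 * a) 0 - theta₂ (2 * a) (2 * x) * theta₃ (2 * a) 0 := by
  have ha2 : 0 < 2 * a := by positivity
  have h₃ := theta₃_add_pi ha2 (2 * (x - Real.pi / 2))
  have h₂ := theta₂_add_pi ha2 (2 * (x - Real.pi / 2))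
  rw [show 2 * (x - Real.pi / 2) + Real.pi = 2 * x by ring] at h₃ h₂
  rw [theta₁, theta₂_sq ha, h₃, h₂]
  ring

theorem theta₄_zero_sq_mul_theta₂_sq (ha : 0 < a) (x : ℝ) :
    theta₄ a 0 ^ 2 * theta₂ a x ^ 2 =
      theta₂ a 0 ^ 2 * theta₄ a x ^ 2 - theta₃ a 0 ^ 2 * theta₁ a x ^ 2 := by
  simp only [theta₄_sq ha, theta₂_sq ha, theta₁_sq ha, theta₃_sq ha, mul_zero]
  ring

theorem theta₄_zero_sq_mul_theta₃_sq (ha : 0 < a) (x : ℝ) :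
    theta₄ a 0 ^ 2 * theta₃ a x ^ 2 =
      theta₃ a 0 ^ 2 * theta₄ a x ^ 2 - theta₂ a 0 ^ 2 * theta₁ a x ^ 2 := by
  simp only [theta₄_sq ha, theta₃_sq ha, theta₁_sq ha, theta₂_sq ha, mul_zero]
  ring

theorem theta₃_zero_pow_four (ha : 0 < a) :
    (theta₃ a 0 ^ 2) ^ 2 = (theta₂ a 0 ^ 2) ^ 2 + (theta₄ a 0 ^ 2) ^ 2 := by
  simp only [theta₄_sq ha, theta₃_sq ha, theta₂_sq ha, mul_zero]
  ring

theorem theta₄_add_mul_theta₄_sub_mul_theta₄_zero_sq (ha : 0 < a) (x y : ℝ) :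
    theta₄ a (x + y) * theta₄ a (x - y) * theta₄ a 0 ^ 2 =
      theta₄ a x ^ 2 * theta₄ a y ^ 2 - theta₁ a x ^ 2 * theta₁ a y ^ 2 := by
  rw [theta₄_add_mul_theta₄_sub ha]
  simp only [theta₄_sq ha, theta₁_sq ha, mul_zero]
  ring

end RealTheta

/-! ### Positivity and modular transformation -/

section Modular

variable {a : ℝ}

theorem thetaChar_zero_modular (ha : 0 < a) (z : ℂ) :
    thetaChar 0 a z = ((√a)⁻¹ : ℝ) * Complex.exp (-z ^ 2 / (Real.pi * a)) *
      thetaChar 0 a⁻¹ (-Complex.I * z / a) := by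
  have hpi := ofReal_pi_ne_zero
  have ha' : (a : ℂ) ≠ 0 := Complex.ofReal_ne_zero.2 ha.ne'
  have hsqrt : (-Complex.I * (Complex.I * (a : ℂ))) ^ (1 / 2 : ℂ) = (√a : ℝ) := by
    rw [← mul_assoc, neg_mul, Complex.I_mul_I, neg_neg, one_mul, Real.sqrt_eq_rpow,
      Complex.ofReal_cpow ha.le]
    norm_num
  have h := jacobiTheta₂_functional_equation (z / Real.pi) (Complex.I * a)
  rw [hsqrt] at h
  simp only [thetaChar, Complex.ofReal_zero, mul_zero, add_zero, zero_mul, ne_eq,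
    OfNat.ofNat_ne_zero, not_false_eq_true, zero_pow, Complex.exp_zero, one_mul]
  rw [h]
  congr 2
  · push_cast
    rw [one_div]
  · congr 1
    field_simp
  · field_simp
    simp
  · push_cast
    field_simp
    simp

theorem thetaCharTerm_zero_neg_I_mul (a y : ℝ) (n : ℤ) :
    thetaCharTerm 0 a (-Complex.I * y) n =
      (Real.exp (-Real.pi * a * n ^ 2 + 2 * n * y) : ℝ) := by
  rw [thetaCharTerm]
  push_cast
  congr 1
  linear_combination (-2 * n * y : ℂ) * Complex.I_sq

theorem re_thetaChar_zero_neg_I_mul_pos (ha : 0 < a) (y : ℝ) :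
    0 < (thetaChar 0 a (-Complex.I * y)).re := by
  have hsum := Complex.hasSum_re (hasSum_thetaCharTerm 0 ha (-Complex.I * y))
  simp only [thetaCharTerm_zero_neg_I_mul, Complex.ofReal_re] at hsum
  rw [← hsum.tsum_eq]
  exact hsum.summable.tsum_pos (fun n => (Real.exp_pos _).le) 0 (Real.exp_pos _)

theorem theta₃_pos (ha : 0 < a) (y : ℝ) : 0 < theta₃ a y := by
  have harg : -Complex.I * y / a = -Complex.I * (y / a : ℝ) := by
    push_cast
    ring
  have hexp : Complex.exp (-(y : ℂ) ^ 2 / (Real.pi * a)) =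
      (Real.exp (-y ^ 2 / (Real.pi * a)) : ℝ) := by
    push_cast
    rfl
  have hpos := re_thetaChar_zero_neg_I_mul_pos (inv_pos.2 ha) (y / a)
  rw [theta₃, thetaChar_zero_modular ha, harg, hexp, ← Complex.ofReal_mul, Complex.re_ofReal_mul]
  positivity

theorem theta₄_pos (ha : 0 < a) (y : ℝ) : 0 < theta₄ a y := theta₃_pos ha _

theorem thetaChar_half_eq (a : ℝ) (z : ℂ) :
    thetaChar (1 / 2) a z = Complex.exp (-Real.pi * a / 4 + Complex.I * z) *
      thetaChar 0 a (z + Complex.I * Real.pi * a / 2) := by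
  have hpi := ofReal_pi_ne_zero
  simp only [thetaChar, Complex.ofReal_zero, mul_zero, add_zero, zero_mul, ne_eq,
    OfNat.ofNat_ne_zero, not_false_eq_true, zero_pow, Complex.exp_zero, one_mul]
  congr 2
  · push_cast
    ring
  · push_cast
    field_simp

theorem theta₃_zero_modular (ha : 0 < a) : theta₃ a 0 = (√a)⁻¹ * theta₃ a⁻¹ 0 := by
  rw [theta₃, thetaChar_zero_modular ha]
  simp [theta₃]

theorem theta₂_zero_modular (ha : 0 < a) : theta₂ a 0 = (√a)⁻¹ * theta₄ a⁻¹ 0 := by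
  have hpi := ofReal_pi_ne_zero
  have ha' : (a : ℂ) ≠ 0 := Complex.ofReal_ne_zero.2 ha.ne'
  have harg : -Complex.I * (Complex.I * Real.pi * a / 2) / a = (Real.pi / 2 : ℝ) := by
    push_cast
    field_simp
    linear_combination -Complex.I_sq
  have hexp : -(Real.pi : ℂ) * a / 4 + -(Complex.I * Real.pi * a / 2) ^ 2 / (Real.pi * a) = 0 := by
    field_simp
    linear_combination (-4 * Real.pi * a : ℂ) * Complex.I_sq
  rw [theta₂, theta₄, theta₃, Complex.ofReal_zero, thetaChar_half_eq, thetaChar_zero_modular ha,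
    zero_add, zero_add, harg, mul_zero, add_zero, ← mul_assoc, mul_left_comm, ← Complex.exp_add,
    hexp, Complex.exp_zero, mul_one, Complex.re_ofReal_mul]

theorem theta₄_zero_modular (ha : 0 < a) : theta₄ a 0 = (√a)⁻¹ * theta₂ a⁻¹ 0 := by
  rw [theta₂_zero_modular (inv_pos.2 ha), inv_inv, Real.sqrt_inv, inv_inv,
    inv_mul_cancel_left₀ (Real.sqrt_pos.2 ha).ne']

theorem theta₂_zero_pos (ha : 0 < a) : 0 < theta₂ a 0 := by
  rw [theta₂_zero_modular ha]
  have := theta₄_pos (inv_pos.2 ha) 0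
  positivity

theorem thetaChar_half_modular (ha : 0 < a) (z : ℂ) :
    thetaChar (1 / 2) a (z - Real.pi / 2) =
      ((√a)⁻¹ : ℝ) * Complex.I * Complex.exp (-z ^ 2 / (Real.pi * a)) *
        thetaChar (1 / 2) a⁻¹ (-Complex.I * z / a - Real.pi / 2) := by
  have hpi := ofReal_pi_ne_zero
  have ha' : (a : ℂ) ≠ 0 := Complex.ofReal_ne_zero.2 ha.ne'
  have hperiod := thetaChar_add_pi 0 (inv_pos.2 ha)
    (-Complex.I * z / a - Real.pi / 2 + Complex.I * Real.pi * (a⁻¹ : ℝ) / 2)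
  have harg : -Complex.I * (z - Real.pi / 2 + Complex.I * Real.pi * a / 2) / a =
      -Complex.I * z / a - Real.pi / 2 + Complex.I * Real.pi * (a⁻¹ : ℝ) / 2 + Real.pi := by
    push_cast
    field_simp
    linear_combination (-(Real.pi : ℂ) * a) * Complex.I_sq
  have hexp : Complex.exp (-Real.pi * a / 4 + Complex.I * (z - Real.pi / 2)) *
      Complex.exp (-(z - Real.pi / 2 + Complex.I * Real.pi * a / 2) ^ 2 / (Real.pi * a)) =
      Complex.exp (Real.pi / 2 * Complex.I) * Complex.exp (-z ^ 2 / (Real.pi * a)) *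
        Complex.exp (-Real.pi * (a⁻¹ : ℝ) / 4 +
          Complex.I * (-Complex.I * z / a - Real.pi / 2)) := by
    simp only [← Complex.exp_add]
    congr 1
    push_cast
    field_simp
    ring_nf
    simp only [Complex.I_sq]
    ring
  rw [Complex.exp_pi_div_two_mul_I] at hexp
  rw [thetaChar_half_eq, thetaChar_zero_modular ha, thetaChar_half_eq, harg, hperiod]
  simp only [Complex.ofReal_zero, mul_zero, Complex.exp_zero, one_mul]
  linear_combination ((√a)⁻¹ : ℝ) * thetaChar 0 a⁻¹ (-Complex.I * z / a - Real.pi / 2 +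
    Complex.I * Real.pi * (a⁻¹ : ℝ) / 2) * hexp

theorem ofReal_theta₁ (ha : 0 < a) (y : ℝ) :
    (theta₁ a y : ℂ) = thetaChar (1 / 2) a (y - Real.pi / 2) := by
  rw [theta₁, ofReal_theta₂ ha]
  push_cast
  rfl

theorem hasDerivAt_thetaChar_half_sub (ha : 0 < a) :
    HasDerivAt (fun z : ℂ => thetaChar (1 / 2) a (z - Real.pi / 2)) (deriv (theta₁ a) 0 : ℝ) 0 := by
  have hcomplex : HasDerivAt (fun z : ℂ => thetaChar (1 / 2) a (z - Real.pi / 2))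
      (deriv (fun z : ℂ => thetaChar (1 / 2) a (z - Real.pi / 2)) 0) ((0 : ℝ) : ℂ) := by
    rw [Complex.ofReal_zero]
    exact (((differentiable_thetaChar (1 / 2) ha).comp (by fun_prop :
      Differentiable ℂ fun z : ℂ => z - Real.pi / 2)) 0).hasDerivAt
  have hreal := (hasDerivAt_theta₁ ha 0).ofReal_comp
  simp only [ofReal_theta₁ ha] at hreal
  rwa [hcomplex.comp_ofReal.unique hreal, Complex.ofReal_zero] at hcomplex

theorem deriv_theta₁_zero_modular (ha : 0 < a) :
    deriv (theta₁ a) 0 = (√a)⁻¹ * a⁻¹ * deriv (theta₁ a⁻¹) 0 := by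
  have ha' := inv_pos.2 ha
  have hzero : thetaChar (1 / 2) a⁻¹ (0 - Real.pi / 2) = 0 := by
    rw [← Complex.ofReal_zero, ← ofReal_theta₁ ha', theta₁_zero ha']
  have hrotate : HasDerivAt (fun z : ℂ => thetaChar (1 / 2) a⁻¹ (-Complex.I * z / a - Real.pi / 2))
      ((deriv (theta₁ a⁻¹) 0 : ℝ) * (-Complex.I / a)) 0 := by
    have hlin : HasDerivAt (fun z : ℂ => -Complex.I * z / a) (-Complex.I / a) 0 := by
      simpa using ((hasDerivAt_id (0 : ℂ)).const_mul (-Complex.I)).div_const (a : ℂ)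
    refine HasDerivAt.comp (h₂ := fun z : ℂ => thetaChar (1 / 2) a⁻¹ (z - Real.pi / 2)) 0 ?_ hlin
    simpa using hasDerivAt_thetaChar_half_sub ha'
  have hgauss : DifferentiableAt ℂ
      (fun z : ℂ => ((√a)⁻¹ : ℝ) * Complex.I * Complex.exp (-z ^ 2 / (Real.pi * a))) 0 := by
    fun_prop
  have hprod := hgauss.hasDerivAt.mul hrotate
  have hleft := hasDerivAt_thetaChar_half_sub ha
  simp only [thetaChar_half_modular ha] at hleft
  have h := hleft.unique hprod
  simp only [mul_zero, zero_div, hzero, neg_zero, ne_eq, OfNat.ofNat_ne_zero, not_false_eq_true,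
    zero_pow, Complex.exp_zero, mul_one, zero_add] at h
  rw [← Complex.ofReal_inj, h]
  push_cast
  linear_combination (-((√a : ℝ) : ℂ)⁻¹ * (deriv (theta₁ a⁻¹) 0 : ℝ) * (a : ℂ)⁻¹) * Complex.I_sq

end Modular

/-! ### The Wronskian of `θ₁` and `θ₄` -/

section Wronskian

variable {a : ℝ}

theorem theta₂_add_mul_theta₃_sub (ha : 0 < a) (x y : ℝ) :
    theta₂ a (x + y) * theta₃ a (x - y) =
      2 * (thetaChar (1 / 4) (2 * a) (2 * x : ℝ) * thetaChar (1 / 4) (2 * a) (2 * y : ℝ)).re := by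
  have ha2 : 0 < 2 * a := by positivity
  have hprod := thetaChar_add_mul_thetaChar_sub (1 / 2) 0 ha x y
  have hx := thetaChar_three_quarters ha2 (2 * x)
  have hy := thetaChar_three_quarters ha2 (2 * y)
  push_cast at hx hy
  norm_num at hprod
  rw [hx, hy, ← map_mul, Complex.add_conj] at hprod
  rw [← Complex.ofReal_inj]
  push_cast [ofReal_theta₂ ha, ofReal_theta₃ ha]
  norm_num [hprod]

theorem theta₁_add_mul_theta₄_sub (ha : 0 < a) (x y : ℝ) :
    theta₁ a (x + y) * theta₄ a (x - y) =
      2 * (thetaChar (1 / 4) (2 * a) (2 * x : ℝ) * thetaChar (1 / 4) (2 * a) (2 * y : ℝ)).im := by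
  have h := theta₂_add_mul_theta₃_sub ha x (y - Real.pi / 2)
  rw [show 2 * (y - Real.pi / 2) = 2 * y - Real.pi by ring,
    thetaChar_quarter_sub_pi (by positivity), neg_mul, mul_neg, mul_left_comm, Complex.neg_re,
    Complex.I_mul_re, neg_neg] at h
  rw [← h, theta₁, theta₄, add_sub_assoc, sub_add]

theorem thetaChar_two_mul_neg (ε : ℝ) (ha : 0 < a) (y : ℝ) :
    thetaChar ε a (2 * -y : ℝ) = starRingEnd ℂ (thetaChar ε a (2 * y : ℝ)) := by
  rw [conj_thetaChar ε ha, mul_neg, Complex.ofReal_neg]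

theorem im_thetaChar_two_mul_zero (ε : ℝ) (ha : 0 < a) :
    (thetaChar ε a (2 * 0 : ℝ)).im = 0 := by
  have h := thetaChar_two_mul_neg ε ha 0
  rwa [neg_zero, eq_comm, Complex.conj_eq_iff_im] at h

theorem deriv_zero_of_even {f : ℝ → ℝ} (hf : ∀ x, f (-x) = f x) : deriv f 0 = 0 := by
  have h := deriv_comp_neg f 0
  rw [show (fun x => f (-x)) = f from funext hf, neg_zero] at h
  linarith

theorem hasDerivAt_re_thetaChar_two_mul_zero (ε : ℝ) (ha : 0 < a) :
    HasDerivAt (fun y : ℝ => (thetaChar ε a (2 * y : ℝ)).re) 0 0 := by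
  have hdiff : Differentiable ℝ fun y : ℝ => (thetaChar ε a (2 * y : ℝ)).re :=
    ((contDiff_re_thetaChar ε ha).differentiable (by simp)).comp
      (by fun_prop : Differentiable ℝ fun y : ℝ => 2 * y)
  refine (hdiff 0).hasDerivAt.congr_deriv (deriv_zero_of_even fun y => ?_)
  rw [thetaChar_two_mul_neg ε ha, Complex.conj_re]

theorem hasDerivAt_im_thetaChar_two_mul_zero (ε : ℝ) (ha : 0 < a) :
    HasDerivAt (fun y : ℝ => (thetaChar ε a (2 * y : ℝ)).im)
      (deriv (fun y : ℝ => (thetaChar ε a (2 * y : ℝ)).im) 0) 0 :=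
  (((contDiff_im_thetaChar ε ha).differentiable (by simp)).comp
    (by fun_prop : Differentiable ℝ fun y : ℝ => 2 * y) 0).hasDerivAt

theorem theta₂_mul_theta₃ (ha : 0 < a) (x : ℝ) :
    theta₂ a x * theta₃ a x =
      2 * ((thetaChar (1 / 4) (2 * a) (2 * x : ℝ)).re *
        (thetaChar (1 / 4) (2 * a) (2 * 0 : ℝ)).re) := by
  have h := theta₂_add_mul_theta₃_sub ha x 0
  rw [add_zero, sub_zero, Complex.mul_re, im_thetaChar_two_mul_zero _ (by positivity)] at h
  rw [h, mul_zero (thetaChar (1 / 4) (2 * a) (2 * x : ℝ)).im, sub_zero]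

theorem deriv_theta₁_mul_theta₄_sub (ha : 0 < a) (x : ℝ) :
    deriv (theta₁ a) x * theta₄ a x - theta₁ a x * deriv (theta₄ a) x =
      2 * ((thetaChar (1 / 4) (2 * a) (2 * x : ℝ)).re *
        deriv (fun y : ℝ => (thetaChar (1 / 4) (2 * a) (2 * y : ℝ)).im) 0) := by
  have ha2 : 0 < 2 * a := by positivity
  have hleft : HasDerivAt (fun y => theta₁ a (x + y) * theta₄ a (x - y))
      (deriv (theta₁ a) x * theta₄ a x - theta₁ a x * deriv (theta₄ a) x) 0 := by
    have h₁ := (hasDerivAt_theta₁ ha (x + 0)).comp_const_add x 0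
    have h₄ := (hasDerivAt_theta₄ ha (x - 0)).comp_const_sub x 0
    refine (h₁.mul h₄).congr_deriv ?_
    simp only [add_zero, sub_zero]
    ring
  have hright := (((hasDerivAt_im_thetaChar_two_mul_zero (1 / 4) ha2).const_mul
    (thetaChar (1 / 4) (2 * a) (2 * x : ℝ)).re).add
      ((hasDerivAt_re_thetaChar_two_mul_zero (1 / 4) ha2).const_mul
        (thetaChar (1 / 4) (2 * a) (2 * x : ℝ)).im)).const_mul 2
  simp only [theta₁_add_mul_theta₄_sub ha, Complex.mul_im] at hleft
  rw [hleft.unique hright, mul_zero, add_zero]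

/- Both sides are multiples of the real part of the theta function with characteristic `1/4`; the
constant is found at `x = 0`. -/
theorem theta_wronskian (ha : 0 < a) (x : ℝ) :
    (deriv (theta₁ a) x * theta₄ a x - theta₁ a x * deriv (theta₄ a) x) *
        (theta₂ a 0 * theta₃ a 0) =
      deriv (theta₁ a) 0 * theta₄ a 0 * (theta₂ a x * theta₃ a x) := by
  have hzero := deriv_theta₁_mul_theta₄_sub ha 0
  rw [theta₁_zero ha, zero_mul, sub_zero] at hzero
  rw [deriv_theta₁_mul_theta₄_sub ha, theta₂_mul_theta₃ ha, hzero, theta₂_mul_theta₃ ha]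
  ring

end Wronskian

/-! ### Series expansions -/

section Series

variable {a : ℝ}

theorem re_thetaCharTerm (ε a y : ℝ) (n : ℤ) :
    (thetaCharTerm ε a y n).re =
      Real.exp (-Real.pi * a * (n + ε) ^ 2) * Real.cos (2 * (n + ε) * y) := by
  have hgauss : -(Real.pi : ℂ) * a * (n + ε) ^ 2 = (-Real.pi * a * (n + ε) ^ 2 : ℝ) := by
    push_cast
    rfl
  have hphase : 2 * Complex.I * (n + ε) * y = (2 * (n + ε) * y : ℝ) * Complex.I := by
    push_cast
    ring
  rw [thetaCharTerm, Complex.exp_add, hgauss, hphase, ← Complex.ofReal_exp, Complex.re_ofReal_mul,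
    Complex.exp_ofReal_mul_I_re]

theorem hasSum_theta₁ (ha : 0 < a) (y : ℝ) :
    HasSum (fun n : ℕ => 2 * ((-1 : ℝ) ^ n *
      Real.exp (-Real.pi * a) ^ (((n : ℝ) + 1 / 2) ^ 2) * Real.sin ((2 * (n : ℝ) + 1) * y)))
      (theta₁ a y) := by
  have hsum := (Complex.hasSum_re
    (hasSum_thetaCharTerm (1 / 2) ha (y - Real.pi / 2 : ℝ))).nat_add_neg_add_one
  refine hsum.congr_fun fun n => ?_
  have hcos : Real.cos (2 * ((n : ℝ) + 1 / 2) * (y - Real.pi / 2)) =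
      (-1) ^ n * Real.sin ((2 * n + 1) * y) := by
    rw [← Real.sin_sub_nat_mul_pi, ← Real.cos_sub_pi_div_two]
    congr 1
    ring
  have hneg : 2 * (-((n : ℝ) + 1) + 1 / 2) * (y - Real.pi / 2) =
      -(2 * ((n : ℝ) + 1 / 2) * (y - Real.pi / 2)) := by ring
  rw [re_thetaCharTerm, re_thetaCharTerm, ← Real.exp_mul]
  push_cast
  rw [hneg, Real.cos_neg, hcos, show (-((n : ℝ) + 1) + 1 / 2) ^ 2 = (n + 1 / 2) ^ 2 by ring]
  ring

theorem theta1R_eq_theta₁ (ha : 0 < a) (y : ℝ) :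
    theta1R (Real.exp (-Real.pi * a)) y = theta₁ a y := by
  rw [theta1R, ← tsum_mul_left]
  exact (hasSum_theta₁ ha y).tsum_eq

theorem hasSum_theta₄_sub_one (ha : 0 < a) (y : ℝ) :
    HasSum (fun n : ℕ => 2 * ((-1 : ℝ) ^ (n + 1) * Real.exp (-Real.pi * a) ^ ((n + 1) ^ 2) *
      Real.cos (2 * ((n : ℝ) + 1) * y))) (theta₄ a y - 1) := by
  have hsum := (hasSum_nat_add_iff' 1).2 (Complex.hasSum_re
    (hasSum_thetaCharTerm 0 ha (y + Real.pi / 2 : ℝ))).nat_add_neg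
  have hterm : (thetaCharTerm 0 a (y + Real.pi / 2 : ℝ) 0).re = 1 := by
    rw [re_thetaCharTerm]
    simp
  have hlim : (thetaChar 0 a (y + Real.pi / 2 : ℝ)).re + 1 - (1 + 1) = theta₄ a y - 1 := by
    rw [theta₄, theta₃]
    ring
  rw [Finset.sum_range_one, Nat.cast_zero, neg_zero, hterm, hlim] at hsum
  refine hsum.congr_fun fun n => ?_
  have hcos : Real.cos (2 * ((n : ℝ) + 1) * (y + Real.pi / 2)) =
      (-1) ^ (n + 1) * Real.cos (2 * ((n : ℝ) + 1) * y) := by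
    rw [← Real.cos_add_nat_mul_pi]
    congr 1
    push_cast
    ring
  have hneg : 2 * (-((n : ℝ) + 1)) * (y + Real.pi / 2) =
      -(2 * ((n : ℝ) + 1) * (y + Real.pi / 2)) := by ring
  rw [re_thetaCharTerm, re_thetaCharTerm, ← Real.exp_nat_mul]
  push_cast
  rw [add_zero, add_zero, hneg, Real.cos_neg, hcos, neg_sq, mul_comm _ (((n : ℝ) + 1) ^ 2)]
  ring

theorem theta4R_eq_theta₄ (ha : 0 < a) (y : ℝ) :
    theta4R (Real.exp (-Real.pi * a)) y = theta₄ a y := by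
  rw [theta4R, ← tsum_mul_left, (hasSum_theta₄_sub_one ha y).tsum_eq, add_sub_cancel]

end Series

/-! ### Positivity of `θ₁` -/

section Positivity

variable {a : ℝ}

theorem abs_sin_nat_mul_le (n : ℕ) (y : ℝ) : |Real.sin (n * y)| ≤ n * |Real.sin y| := by
  induction n with
  | zero => simp
  | succ n ih =>
    have hcos := Real.abs_cos_le_one y
    have hcos_mul := Real.abs_cos_le_one (n * y)
    push_cast
    rw [add_mul, one_mul, Real.sin_add, add_mul, one_mul]
    calc |Real.sin (n * y) * Real.cos y + Real.cos (n * y) * Real.sin y|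
        ≤ |Real.sin (n * y)| * |Real.cos y| + |Real.cos (n * y)| * |Real.sin y| := by
          rw [← abs_mul, ← abs_mul]
          exact abs_add_le _ _
      _ ≤ |Real.sin (n * y)| * 1 + 1 * |Real.sin y| := by gcongr
      _ ≤ n * |Real.sin y| + |Real.sin y| := by linarith

theorem norm_theta₁_term_succ_le {q : ℝ} (hq : 0 < q) (hq' : q ≤ 1 / 4) (y : ℝ) (n : ℕ) :
    ‖2 * ((-1 : ℝ) ^ (n + 1) * q ^ ((((n + 1 : ℕ) : ℝ) + 1 / 2) ^ 2) *
      Real.sin ((2 * ((n + 1 : ℕ) : ℝ) + 1) * y))‖ ≤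
      2 * (q ^ (1 / 4 : ℝ) * |Real.sin y|) * (1 / 4) * (1 / 4) ^ n := by
  have hexp : q ^ ((((n + 1 : ℕ) : ℝ) + 1 / 2) ^ 2) =
      q ^ (1 / 4 : ℝ) * q ^ ((n + 1) * (n + 2)) := by
    rw [← Real.rpow_natCast q, ← Real.rpow_add hq]
    congr 1
    push_cast
    ring
  have hpow : q ^ ((n + 1) * (n + 2)) ≤ (1 / 16) ^ (n + 1) := by
    calc q ^ ((n + 1) * (n + 2)) ≤ q ^ (2 * (n + 1)) :=
          pow_le_pow_of_le_one hq.le (by linarith) (by nlinarith)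
      _ = (q ^ 2) ^ (n + 1) := pow_mul q 2 (n + 1)
      _ ≤ (1 / 16) ^ (n + 1) := by
          gcongr
          nlinarith
  have hsin : |Real.sin ((2 * ((n + 1 : ℕ) : ℝ) + 1) * y)| ≤ 3 ^ (n + 1) * |Real.sin y| := by
    have hbernoulli := one_add_mul_le_pow (show (-2 : ℝ) ≤ 2 by norm_num) (n + 1)
    refine (by exact_mod_cast abs_sin_nat_mul_le (2 * (n + 1) + 1) y : _ ≤ _).trans ?_
    gcongr
    push_cast at hbernoulli ⊢
    norm_num at hbernoulli
    linarith
  rw [Real.norm_eq_abs, abs_mul, abs_mul, abs_mul, abs_pow, abs_neg, abs_one, one_pow, one_mul,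
    hexp, abs_two, abs_of_pos (by positivity)]
  calc _ ≤ 2 * (q ^ (1 / 4 : ℝ) * (1 / 16) ^ (n + 1) * (3 ^ (n + 1) * |Real.sin y|)) := by gcongr
    _ = 2 * (q ^ (1 / 4 : ℝ) * |Real.sin y|) * (1 / 16 * 3) ^ (n + 1) := by
      rw [mul_pow]
      ring
    _ ≤ 2 * (q ^ (1 / 4 : ℝ) * |Real.sin y|) * (1 / 4) ^ (n + 1) := by
      gcongr
      norm_num
    _ = _ := by
      rw [pow_succ]
      ring

theorem exp_neg_pi_mul_le (ha : 1 ≤ a) : Real.exp (-Real.pi * a) ≤ 1 / 4 := by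
  have hpi : 3 ≤ Real.pi * a := by nlinarith [Real.pi_gt_three]
  have hexp := Real.add_one_le_exp (Real.pi * a)
  rw [neg_mul, Real.exp_neg, one_div]
  exact inv_anti₀ (by norm_num) (by linarith)

/- The leading term of the series dominates the sum of all others. -/
theorem theta₁_ne_zero_of_one_le (ha : 1 ≤ a) {y : ℝ} (hy : y ∈ Set.Ioo 0 Real.pi) :
    theta₁ a y ≠ 0 := by
  have hsin : 0 < Real.sin y := Real.sin_pos_of_mem_Ioo hy
  set q := Real.exp (-Real.pi * a) with hq
  have hq0 : 0 < q := Real.exp_pos _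
  set lead := 2 * (q ^ (1 / 4 : ℝ) * |Real.sin y|) with hlead
  have hlead_pos : 0 < lead := by
    rw [hlead, abs_of_pos hsin]
    positivity
  have htail := (hasSum_nat_add_iff' 1).2 (hasSum_theta₁ (zero_lt_one.trans_le ha) y)
  have hgeom : HasSum (fun n : ℕ => lead * (1 / 4) * (1 / 4 : ℝ) ^ n)
      (lead * (1 / 4) * (1 - 1 / 4)⁻¹) :=
    (hasSum_geometric_of_lt_one (by norm_num) (by norm_num)).mul_left _
  have hbound := tsum_of_norm_bounded hgeom
    (norm_theta₁_term_succ_le hq0 (exp_neg_pi_mul_le ha) y)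
  have hzeroth : 2 * ((-1 : ℝ) ^ 0 * q ^ ((((0 : ℕ) : ℝ) + 1 / 2) ^ 2) *
      Real.sin ((2 * ((0 : ℕ) : ℝ) + 1) * y)) = lead := by
    rw [hlead, abs_of_pos hsin]
    norm_num
  rw [htail.tsum_eq, Finset.sum_range_one, ← hq, hzeroth] at hbound
  intro hzero
  rw [hzero, zero_sub, norm_neg, Real.norm_eq_abs, abs_of_pos hlead_pos] at hbound
  norm_num at hbound
  linarith

/- The duplication formula expresses `θ₁(2x)` at parameter `2a` through `θ₁(x) θ₂(x)` at `a`. -/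
theorem theta₁_ne_zero_of_two_mul (ha : 0 < a)
    (h : ∀ y ∈ Set.Ioo 0 Real.pi, theta₁ (2 * a) y ≠ 0) :
    ∀ y ∈ Set.Ioo 0 Real.pi, theta₁ a y ≠ 0 := by
  have ha2 : 0 < 2 * a := by positivity
  have hhalf : ∀ x ∈ Set.Ioo 0 (Real.pi / 2), theta₁ a x ≠ 0 := by
    intro x hx hzero
    have hdup := theta₂_add_mul_theta₂_sub ha (x - Real.pi / 4) (-(Real.pi / 4))
    rw [show x - Real.pi / 4 + -(Real.pi / 4) = x - Real.pi / 2 by ring,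
      show 2 * (x - Real.pi / 4) = 2 * x - Real.pi / 2 by ring,
      show 2 * -(Real.pi / 4) = 0 - Real.pi / 2 by ring, ← theta₁, ← theta₁, ← theta₁, hzero,
      theta₁_zero ha2, zero_mul, mul_zero, add_zero, eq_comm, mul_eq_zero] at hdup
    exact hdup.elim (h (2 * x) ⟨by linarith [hx.1], by linarith [hx.2]⟩) (theta₃_pos ha2 _).ne'
  intro y hy
  rcases lt_trichotomy y (Real.pi / 2) with hlt | rfl | hgt
  · exact hhalf y ⟨hy.1, hlt⟩
  · exact (theta₁_pi_div_two a).trans_ne (theta₂_zero_pos ha).ne'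
  · rw [← theta₁_pi_sub ha]
    exact hhalf _ ⟨by linarith [hy.2], by linarith⟩

theorem theta₁_ne_zero (ha : 0 < a) : ∀ y ∈ Set.Ioo 0 Real.pi, theta₁ a y ≠ 0 := by
  obtain ⟨n, hn⟩ := pow_unbounded_of_one_lt (1 / a) one_lt_two
  have hlarge : 1 ≤ 2 ^ n * a := ((div_lt_iff₀ ha).1 hn).le
  clear hn
  induction n generalizing a with
  | zero => exact fun y hy => theta₁_ne_zero_of_one_le (by simpa using hlarge) hy
  | succ n ih =>
    refine theta₁_ne_zero_of_two_mul ha (ih (by positivity) ?_)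
    rwa [← mul_assoc, ← pow_succ]

theorem theta₁_pos (ha : 0 < a) {y : ℝ} (hy : y ∈ Set.Ioo 0 Real.pi) : 0 < theta₁ a y := by
  by_contra hn
  have hzero : (0 : ℝ) ∈ Set.uIcc (theta₁ a y) (theta₁ a (Real.pi / 2)) :=
    Set.mem_uIcc_of_le (not_lt.1 hn) ((theta₁_pi_div_two a).symm ▸ (theta₂_zero_pos ha).le)
  obtain ⟨z, hz, hz0⟩ :=
    intermediate_value_uIcc (contDiff_theta₁ ha).continuous.continuousOn hzero
  have hmid : Real.pi / 2 ∈ Set.Ioo 0 Real.pi := ⟨by positivity, by linarith [Real.pi_pos]⟩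
  exact theta₁_ne_zero ha z (Set.ordConnected_Ioo.uIcc_subset hy hmid hz) hz0

end Positivity

/-! ### Jacobi elliptic functions as theta quotients -/

/-- The elliptic modulus belonging to the nome `exp (-π * a)`. -/
def thetaModulus (a : ℝ) : ℝ := theta₂ a 0 ^ 2 / theta₃ a 0 ^ 2

/-- The ratio between the argument of the Jacobi elliptic functions and the argument of the theta
functions; it is later identified with `2 K / π`. -/
def thetaScale (a : ℝ) : ℝ := deriv (theta₁ a) 0 * theta₃ a 0 / (theta₂ a 0 * theta₄ a 0)

/-- The elliptic sine as a theta quotient, in the theta argument. -/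
def thetaSn (a y : ℝ) : ℝ := theta₃ a 0 / theta₂ a 0 * (theta₁ a y / theta₄ a y)

/-- The elliptic cosine as a theta quotient, in the theta argument. -/
def thetaCn (a y : ℝ) : ℝ := theta₄ a 0 / theta₂ a 0 * (theta₂ a y / theta₄ a y)

/-- The delta amplitude as a theta quotient, in the theta argument. -/
def thetaDn (a y : ℝ) : ℝ := theta₄ a 0 / theta₃ a 0 * (theta₃ a y / theta₄ a y)

section ThetaQuotients

variable {a : ℝ}

theorem thetaModulus_pos (ha : 0 < a) : 0 < thetaModulus a :=
  div_pos (pow_pos (theta₂_zero_pos ha) 2) (pow_pos (theta₃_pos ha 0) 2)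

theorem one_sub_thetaModulus_sq (ha : 0 < a) :
    1 - thetaModulus a ^ 2 = (theta₄ a 0 ^ 2 / theta₃ a 0 ^ 2) ^ 2 := by
  have hθ₃ := theta₃_pos ha 0
  rw [thetaModulus]
  field_simp
  linarith [theta₃_zero_pow_four ha]

theorem thetaModulus_sq_lt_one (ha : 0 < a) : thetaModulus a ^ 2 < 1 := by
  have hpos : 0 < (theta₄ a 0 ^ 2 / theta₃ a 0 ^ 2) ^ 2 :=
    pow_pos (div_pos (pow_pos (theta₄_pos ha 0) 2) (pow_pos (theta₃_pos ha 0) 2)) 2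
  linarith [one_sub_thetaModulus_sq ha]

theorem thetaModulus_lt_one (ha : 0 < a) : thetaModulus a < 1 :=
  (sq_lt_one_iff₀ (thetaModulus_pos ha).le).1 (thetaModulus_sq_lt_one ha)

theorem thetaModulus_inv (ha : 0 < a) : thetaModulus a⁻¹ = √(1 - thetaModulus a ^ 2) := by
  rw [one_sub_thetaModulus_sq ha, Real.sqrt_sq (by positivity), thetaModulus,
    theta₃_zero_modular ha, theta₄_zero_modular ha]
  field_simp

theorem thetaScale_inv (ha : 0 < a) : thetaScale a⁻¹ = a * thetaScale a := by
  rw [thetaScale, thetaScale, theta₂_zero_modular ha, theta₃_zero_modular ha,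
    theta₄_zero_modular ha, deriv_theta₁_zero_modular ha]
  field_simp

theorem thetaCn_sq (ha : 0 < a) (y : ℝ) : thetaCn a y ^ 2 = 1 - thetaSn a y ^ 2 := by
  have hθ₄ := theta₄_pos ha y
  have hθ₂ := theta₂_zero_pos ha
  rw [thetaCn, thetaSn]
  field_simp
  linarith [theta₄_zero_sq_mul_theta₂_sq ha y]

theorem thetaDn_sq (ha : 0 < a) (y : ℝ) :
    thetaDn a y ^ 2 = 1 - thetaModulus a ^ 2 * thetaSn a y ^ 2 := by
  have hθ₄ := theta₄_pos ha y
  have hθ₃ := theta₃_pos ha 0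
  rw [thetaDn, thetaSn, thetaModulus]
  field_simp
  linarith [theta₄_zero_sq_mul_theta₃_sq ha y]

theorem thetaDn_pos (ha : 0 < a) (y : ℝ) : 0 < thetaDn a y :=
  mul_pos (div_pos (theta₄_pos ha 0) (theta₃_pos ha 0))
    (div_pos (theta₃_pos ha y) (theta₄_pos ha y))

theorem hasDerivAt_thetaSn (ha : 0 < a) (y : ℝ) :
    HasDerivAt (thetaSn a) (thetaScale a * (thetaCn a y * thetaDn a y)) y := by
  have hθ₄ := theta₄_pos ha y
  have hθ₄0 := theta₄_pos ha 0
  have hθ₃ := theta₃_pos ha 0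
  have hθ₂ := theta₂_zero_pos ha
  have hwronskian := theta_wronskian ha y
  rw [← eq_div_iff (by positivity)] at hwronskian
  refine (((hasDerivAt_theta₁ ha y).div (hasDerivAt_theta₄ ha y) hθ₄.ne').const_mul
    (theta₃ a 0 / theta₂ a 0)).congr_deriv ?_
  rw [hwronskian, thetaScale, thetaCn, thetaDn]
  field_simp

theorem hasDerivAt_thetaDn (ha : 0 < a) (y : ℝ) :
    HasDerivAt (thetaDn a)
      (thetaScale a * -(thetaModulus a ^ 2 * thetaSn a y * thetaCn a y)) y := by
  have hsqrt (z : ℝ) : thetaDn a z = √(1 - thetaModulus a ^ 2 * thetaSn a z ^ 2) := by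
    rw [← thetaDn_sq ha, Real.sqrt_sq (thetaDn_pos ha z).le]
  have hpos := thetaDn_pos ha y
  have hderiv := (((hasDerivAt_thetaSn ha y).fun_pow 2).const_mul (thetaModulus a ^ 2)).const_sub 1
  rw [funext hsqrt]
  refine (hderiv.sqrt (thetaDn_sq ha y ▸ (pow_pos hpos 2).ne')).congr_deriv ?_
  rw [← hsqrt]
  field_simp
  norm_num
  ring

theorem theta₁_add_pi_div_two (a y : ℝ) : theta₁ a (y + Real.pi / 2) = theta₂ a y := by
  rw [theta₁, add_sub_cancel_right]

theorem theta₂_add_pi_div_two (ha : 0 < a) (y : ℝ) :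
    theta₂ a (y + Real.pi / 2) = -theta₁ a y := by
  rw [theta₁, ← theta₂_add_pi ha]
  congr 1
  ring

theorem theta₄_add_pi_div_two (ha : 0 < a) (y : ℝ) : theta₄ a (y + Real.pi / 2) = theta₃ a y := by
  rw [theta₄, ← theta₃_add_pi ha y]
  congr 1
  ring

theorem deriv_theta₁_add_pi_div_two (a y : ℝ) :
    deriv (theta₁ a) (y + Real.pi / 2) = deriv (theta₂ a) y := by
  rw [← deriv_comp_add_const, funext (theta₁_add_pi_div_two a)]

theorem deriv_theta₄_add_pi_div_two (ha : 0 < a) (y : ℝ) :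
    deriv (theta₄ a) (y + Real.pi / 2) = deriv (theta₃ a) y := by
  rw [← deriv_comp_add_const, funext (theta₄_add_pi_div_two ha)]

/- The Wronskian of `θ₂` and `θ₃` is that of `θ₁` and `θ₄` shifted by `π / 2`. -/
theorem hasDerivAt_theta₂_div_theta₃ (ha : 0 < a) (y : ℝ) :
    HasDerivAt (fun y => theta₃ a 0 / theta₂ a 0 * (theta₂ a y / theta₃ a y))
      (-thetaScale a * (1 - thetaModulus a ^ 2) * thetaSn a y / thetaDn a y ^ 2) y := by
  have hθ₄ := theta₄_pos ha y
  have hθ₄0 := theta₄_pos ha 0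
  have hθ₃ := theta₃_pos ha y
  have hθ₃0 := theta₃_pos ha 0
  have hθ₂ := theta₂_zero_pos ha
  have hwronskian := theta_wronskian ha (y + Real.pi / 2)
  rw [← eq_div_iff (by positivity), deriv_theta₁_add_pi_div_two, deriv_theta₄_add_pi_div_two ha,
    theta₁_add_pi_div_two, theta₄_add_pi_div_two ha, theta₂_add_pi_div_two ha,
    show theta₃ a (y + Real.pi / 2) = theta₄ a y from rfl] at hwronskian
  refine (((hasDerivAt_theta₂ ha y).div (hasDerivAt_theta₃ ha y) hθ₃.ne').const_mul
    (theta₃ a 0 / theta₂ a 0)).congr_deriv ?_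
  rw [hwronskian, one_sub_thetaModulus_sq ha, thetaScale, thetaSn, thetaDn]
  field_simp

theorem hasDerivAt_thetaCn (ha : 0 < a) (y : ℝ) :
    HasDerivAt (thetaCn a) (thetaScale a * -(thetaSn a y * thetaDn a y)) y := by
  have hθ₂ := theta₂_zero_pos ha
  have hθ₃0 := theta₃_pos ha 0
  have hθ₄0 := theta₄_pos ha 0
  have hquot (z : ℝ) : theta₃ a 0 / theta₂ a 0 * (theta₂ a z / theta₃ a z) =
      thetaCn a z / thetaDn a z := by
    have hθ₃ := theta₃_pos ha z
    have hθ₄ := theta₄_pos ha z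
    rw [thetaCn, thetaDn]
    field_simp
  have hdn := thetaDn_pos ha y
  have hderiv := hasDerivAt_theta₂_div_theta₃ ha y
  simp only [hquot] at hderiv
  have hmul := hderiv.mul (hasDerivAt_thetaDn ha y)
  have hcancel : ((fun y => thetaCn a y / thetaDn a y) * thetaDn a : ℝ → ℝ) = thetaCn a :=
    funext fun z => div_mul_cancel₀ _ (thetaDn_pos ha z).ne'
  rw [hcancel] at hmul
  refine hmul.congr_deriv ?_
  field_simp
  linear_combination (thetaScale a * thetaSn a y) * thetaDn_sq ha y -
    (thetaScale a * thetaSn a y * thetaModulus a ^ 2) * thetaCn_sq ha y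

theorem thetaSn_zero (ha : 0 < a) : thetaSn a 0 = 0 := by
  rw [thetaSn, theta₁_zero ha, zero_div, mul_zero]

theorem thetaSn_pi_div_two (ha : 0 < a) : thetaSn a (Real.pi / 2) = 1 := by
  have hθ₂ := theta₂_zero_pos ha
  have hθ₃ := theta₃_pos ha 0
  have hθ₄ := theta₄_add_pi_div_two ha 0
  rw [zero_add] at hθ₄
  rw [thetaSn, theta₁_pi_div_two, hθ₄]
  field_simp

theorem thetaCn_pi_div_two (ha : 0 < a) : thetaCn a (Real.pi / 2) = 0 := by
  have hθ₂ := theta₂_add_pi_div_two ha 0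
  rw [zero_add, theta₁_zero ha, neg_zero] at hθ₂
  rw [thetaCn, hθ₂, zero_div, mul_zero]

theorem thetaCn_pos (ha : 0 < a) {y : ℝ} (hy : y ∈ Set.Ioo (-(Real.pi / 2)) (Real.pi / 2)) :
    0 < thetaCn a y := by
  have hθ₂ : 0 < theta₂ a y := by
    rw [← theta₁_add_pi_div_two]
    exact theta₁_pos ha ⟨by linarith [hy.1], by linarith [hy.2]⟩
  exact mul_pos (div_pos (theta₄_pos ha 0) (theta₂_zero_pos ha)) (div_pos hθ₂ (theta₄_pos ha y))

theorem deriv_theta₁_zero_nonneg (ha : 0 < a) : 0 ≤ deriv (theta₁ a) 0 := by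
  have hslope := (hasDerivAt_theta₁ ha 0).hasDerivWithinAt (s := Set.Ioi 0)
  rw [hasDerivWithinAt_iff_tendsto_slope' Set.self_notMem_Ioi] at hslope
  refine ge_of_tendsto hslope ?_
  filter_upwards [Ioo_mem_nhdsGT Real.pi_pos] with y hy
  rw [slope_def_field, theta₁_zero ha, sub_zero, sub_zero]
  exact (div_pos (theta₁_pos ha hy) hy.1).le

theorem thetaScale_pos (ha : 0 < a) : 0 < thetaScale a := by
  have hθ₂ := theta₂_zero_pos ha
  have hθ₃ := theta₃_pos ha 0
  have hθ₄ := theta₄_pos ha 0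
  have hnonneg : 0 ≤ thetaScale a :=
    div_nonneg (mul_nonneg (deriv_theta₁_zero_nonneg ha) hθ₃.le) (mul_pos hθ₂ hθ₄).le
  refine hnonneg.lt_of_ne' fun hzero => ?_
  have hconst := eq_of_forall_hasDerivAt_zero (f := thetaSn a)
    (fun x => by simpa [hzero] using hasDerivAt_thetaSn ha x) 0 (Real.pi / 2)
  rw [thetaSn_zero ha, thetaSn_pi_div_two ha] at hconst
  exact zero_ne_one hconst

theorem isJacobiTriple_theta (ha : 0 < a) :
    IsJacobiTriple (thetaModulus a) (fun x => thetaSn a (x / thetaScale a))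
      (fun x => thetaCn a (x / thetaScale a)) (fun x => thetaDn a (x / thetaScale a)) := by
  have hscale := thetaScale_pos ha
  have hθ₂ := theta₂_zero_pos ha
  have hθ₃ := theta₃_pos ha 0
  have hθ₄ := theta₄_pos ha 0
  have hrescale {f : ℝ → ℝ} {x f' : ℝ} (h : HasDerivAt f (thetaScale a * f') (x / thetaScale a)) :
      HasDerivAt (fun x => f (x / thetaScale a)) f' x := by
    refine (h.comp x ((hasDerivAt_id x).div_const _)).congr_deriv ?_
    field_simp
  exact
    { modulus_pos := thetaModulus_pos ha
      modulus_lt_one := thetaModulus_lt_one ha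
      hasDerivAt_sn := fun x => hrescale (hasDerivAt_thetaSn ha _)
      hasDerivAt_cn := fun x => hrescale (hasDerivAt_thetaCn ha _)
      hasDerivAt_dn := fun x => hrescale (hasDerivAt_thetaDn ha _)
      sn_zero := by rw [zero_div, thetaSn_zero ha]
      cn_zero := by rw [zero_div, thetaCn]; field_simp
      dn_zero := by rw [zero_div, thetaDn]; field_simp }

/- Both `K` and `thetaScale a * (π / 2)` are the first positive zero of the elliptic cosine. -/
theorem Kcomp_thetaModulus (ha : 0 < a) :
    Kcomp (thetaModulus a) = thetaScale a * (Real.pi / 2) := by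
  have J := isJacobiTriple_theta ha
  have hscale := thetaScale_pos ha
  have hK := Kcomp_pos (thetaModulus_sq_lt_one ha)
  refine le_antisymm (not_lt.1 fun hlt => ?_) (not_lt.1 fun hlt => ?_)
  · have hpos := J.cn_pos (x := thetaScale a * (Real.pi / 2)) ⟨by positivity, hlt⟩
    rw [mul_div_cancel_left₀ _ hscale.ne', thetaCn_pi_div_two ha] at hpos
    exact hpos.false
  · have hzero := J.cn_eq_cos_jacobiAm (Kcomp (thetaModulus a))
    rw [J.jacobiAm_Kcomp, Real.cos_pi_div_two] at hzero
    refine (thetaCn_pos ha ⟨?_, ?_⟩).ne' hzero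
    · exact (neg_neg_of_pos (by positivity)).trans (by positivity)
    · rwa [div_lt_iff₀' hscale]

theorem Kcomp_sqrt_one_sub_thetaModulus_sq (ha : 0 < a) :
    Kcomp (√(1 - thetaModulus a ^ 2)) = a * Kcomp (thetaModulus a) := by
  rw [← thetaModulus_inv ha, Kcomp_thetaModulus (inv_pos.2 ha), Kcomp_thetaModulus ha,
    thetaScale_inv ha, mul_assoc]

end ThetaQuotients

/-- The lattice parameter `K'(k) / K(k)`, for which `nome k = exp (-π * latticeRatio k)`. -/
def latticeRatio (k : ℝ) : ℝ := Kcomp √(1 - k ^ 2) / Kcomp k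

section Nome

variable {k l : ℝ}

theorem Kcomp_lt_Kcomp (hk : 0 ≤ k) (hkl : k < l) (hl : l < 1) : Kcomp k < Kcomp l := by
  have hl2 : l ^ 2 < 1 := (sq_lt_one_iff₀ (hk.trans hkl.le)).2 hl
  have hkl2 : k ^ 2 < l ^ 2 := pow_lt_pow_left₀ hkl hk two_ne_zero
  refine intervalIntegral.integral_lt_integral_of_continuousOn_of_le_of_exists_lt (by positivity)
    (continuous_inv_sqrt_one_sub_sq_mul_sin_sq (hkl2.trans hl2)).continuousOn
    (continuous_inv_sqrt_one_sub_sq_mul_sin_sq hl2).continuousOn (fun x _ => ?_)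
    ⟨Real.pi / 2, ⟨by positivity, le_rfl⟩, ?_⟩
  · have hpos := one_sub_sq_mul_sin_sq_pos hl2 x
    gcongr
  · have hpos := one_sub_sq_mul_sin_sq_pos hl2 (Real.pi / 2)
    refine inv_strictAnti₀ (Real.sqrt_pos.2 hpos) (Real.sqrt_lt_sqrt hpos.le ?_)
    rw [Real.sin_pi_div_two]
    linarith

theorem latticeRatio_lt_latticeRatio (hk : 0 < k) (hkl : k < l) (hl : l < 1) :
    latticeRatio l < latticeRatio k := by
  have hl2 : l ^ 2 < 1 := (sq_lt_one_iff₀ (hk.trans hkl).le).2 hl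
  have hkl2 : k ^ 2 < l ^ 2 := pow_lt_pow_left₀ hkl hk.le two_ne_zero
  have hk2 : √(1 - k ^ 2) < 1 := by
    rw [Real.sqrt_lt' one_pos]
    nlinarith
  have hcompl := Kcomp_lt_Kcomp (Real.sqrt_nonneg (1 - l ^ 2))
    (Real.sqrt_lt_sqrt (by linarith) (by linarith)) hk2
  have hcompl_pos : 0 < Kcomp √(1 - k ^ 2) :=
    Kcomp_pos ((sq_lt_one_iff₀ (Real.sqrt_nonneg _)).2 hk2)
  exact div_lt_div₀ hcompl (Kcomp_lt_Kcomp hk.le hkl hl).le hcompl_pos.le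
    (Kcomp_pos (hkl2.trans hl2))

theorem nome_eq_exp (k : ℝ) : nome k = Real.exp (-Real.pi * latticeRatio k) := by
  rw [nome, latticeRatio, neg_mul, mul_div_assoc]

theorem latticeRatio_pos (hk : 0 < k) (hk' : k < 1) : 0 < latticeRatio k := by
  have hk2 : k ^ 2 < 1 := (sq_lt_one_iff₀ hk.le).2 hk'
  refine div_pos (Kcomp_pos ?_) (Kcomp_pos hk2)
  rw [Real.sq_sqrt (by linarith)]
  linarith [pow_pos hk 2]

theorem latticeRatio_thetaModulus {a : ℝ} (ha : 0 < a) : latticeRatio (thetaModulus a) = a := by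
  rw [latticeRatio, Kcomp_sqrt_one_sub_thetaModulus_sq ha,
    mul_div_cancel_right₀ _ (Kcomp_pos (thetaModulus_sq_lt_one ha)).ne']

/- `latticeRatio` is strictly decreasing, so its right inverse `thetaModulus` is its inverse. -/
theorem thetaModulus_latticeRatio (hk : 0 < k) (hk' : k < 1) :
    thetaModulus (latticeRatio k) = k := by
  have ha := latticeRatio_pos hk hk'
  have hratio := latticeRatio_thetaModulus ha
  refine le_antisymm (not_lt.1 fun hlt => ?_) (not_lt.1 fun hlt => ?_)
  · exact (latticeRatio_lt_latticeRatio hk hlt (thetaModulus_lt_one ha)).ne hratio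
  · exact (latticeRatio_lt_latticeRatio (thetaModulus_pos ha) hlt hk').ne' hratio

end Nome

/-! ### The logarithmic derivative of `θ₄` -/

section LogDeriv

variable {a : ℝ}

theorem hasDerivAt_deriv_theta₁ (ha : 0 < a) (y : ℝ) :
    HasDerivAt (deriv (theta₁ a)) (deriv (deriv (theta₁ a)) y) y :=
  (((contDiff_theta₁ ha).iterate_deriv 1).differentiable (by simp) y).hasDerivAt

theorem hasDerivAt_deriv_theta₄ (ha : 0 < a) (y : ℝ) :
    HasDerivAt (deriv (theta₄ a)) (deriv (deriv (theta₄ a)) y) y :=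
  (((contDiff_theta₄ ha).iterate_deriv 1).differentiable (by simp) y).hasDerivAt

theorem deriv_theta₄_add_mul_theta₄_sub (ha : 0 < a) (x y : ℝ) :
    (deriv (theta₄ a) (x + y) * theta₄ a (x - y) - theta₄ a (x + y) * deriv (theta₄ a) (x - y)) *
        theta₄ a 0 ^ 2 =
      2 * (theta₄ a x ^ 2 * (theta₄ a y * deriv (theta₄ a) y) -
        theta₁ a x ^ 2 * (theta₁ a y * deriv (theta₁ a) y)) := by
  have hleft := (((hasDerivAt_theta₄ ha (x + y)).comp_const_add x y).fun_mul
    ((hasDerivAt_theta₄ ha (x - y)).comp_const_sub x y)).mul_const (theta₄ a 0 ^ 2)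
  have hright := (((hasDerivAt_theta₄ ha y).fun_pow 2).const_mul (theta₄ a x ^ 2)).fun_sub
    (((hasDerivAt_theta₁ ha y).fun_pow 2).const_mul (theta₁ a x ^ 2))
  simp only [theta₄_add_mul_theta₄_sub_mul_theta₄_zero_sq ha] at hleft
  have h := hleft.unique hright
  norm_num at h
  linear_combination h

/- The second derivative at `y = 0` of the product formula for `θ₄ (x + y) θ₄ (x - y)`. -/
theorem deriv_deriv_theta₄ (ha : 0 < a) (x : ℝ) :
    (deriv (deriv (theta₄ a)) x * theta₄ a x - deriv (theta₄ a) x ^ 2) * theta₄ a 0 ^ 2 =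
      theta₄ a x ^ 2 * (theta₄ a 0 * deriv (deriv (theta₄ a)) 0) -
        theta₁ a x ^ 2 * deriv (theta₁ a) 0 ^ 2 := by
  have hleft :=
    ((((hasDerivAt_deriv_theta₄ ha (x + 0)).comp_const_add x 0).fun_mul
        ((hasDerivAt_theta₄ ha (x - 0)).comp_const_sub x 0)).fun_sub
      (((hasDerivAt_theta₄ ha (x + 0)).comp_const_add x 0).fun_mul
        ((hasDerivAt_deriv_theta₄ ha (x - 0)).comp_const_sub x 0))).mul_const (theta₄ a 0 ^ 2)
  have hright := ((((hasDerivAt_theta₄ ha 0).fun_mul (hasDerivAt_deriv_theta₄ ha 0)).const_mul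
      (theta₄ a x ^ 2)).fun_sub (((hasDerivAt_theta₁ ha 0).fun_mul
        (hasDerivAt_deriv_theta₁ ha 0)).const_mul (theta₁ a x ^ 2))).const_mul 2
  simp only [deriv_theta₄_add_mul_theta₄_sub ha] at hleft
  have h := hleft.unique hright
  rw [deriv_zero_of_even (theta₄_neg ha), theta₁_zero ha, add_zero, sub_zero] at h
  linear_combination (1 / 2) * h

theorem hasDerivAt_logDeriv_theta₄ (ha : 0 < a) (y : ℝ) :
    HasDerivAt (logDeriv (theta₄ a)) (deriv (deriv (theta₄ a)) 0 / theta₄ a 0 -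
      thetaScale a ^ 2 * (thetaModulus a ^ 2 * thetaSn a y ^ 2)) y := by
  have hθ₄ := theta₄_pos ha y
  have hθ₄0 := theta₄_pos ha 0
  have hθ₃ := theta₃_pos ha 0
  have hθ₂ := theta₂_zero_pos ha
  refine ((hasDerivAt_deriv_theta₄ ha y).div (hasDerivAt_theta₄ ha y) hθ₄.ne').congr_deriv ?_
  rw [thetaScale, thetaModulus, thetaSn]
  field_simp
  linear_combination deriv_deriv_theta₄ ha y

theorem logDeriv_theta₄_zero (ha : 0 < a) : logDeriv (theta₄ a) 0 = 0 := by
  rw [logDeriv_apply, deriv_zero_of_even (theta₄_neg ha), zero_div]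

theorem logDeriv_theta₄_pi_div_two (ha : 0 < a) : logDeriv (theta₄ a) (Real.pi / 2) = 0 := by
  rw [logDeriv_apply, ← zero_add (Real.pi / 2), deriv_theta₄_add_pi_div_two ha,
    deriv_zero_of_even (theta₃_neg ha), zero_div]

end LogDeriv

/-! ### The functions `H` and `Θ` -/

/-- The logarithmic derivative of `Θ`, computed through `θ₄`. -/
def thetaZeta (k x : ℝ) : ℝ :=
  logDeriv (theta₄ (latticeRatio k)) (x / thetaScale (latticeRatio k)) /
    thetaScale (latticeRatio k)

namespace IsJacobiTriple

variable {k : ℝ} {sn cn dn : ℝ → ℝ}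

theorem latticeRatio_pos (J : IsJacobiTriple k sn cn dn) : 0 < latticeRatio k :=
  _root_.latticeRatio_pos J.modulus_pos J.modulus_lt_one

theorem thetaModulus_latticeRatio (J : IsJacobiTriple k sn cn dn) :
    thetaModulus (latticeRatio k) = k :=
  _root_.thetaModulus_latticeRatio J.modulus_pos J.modulus_lt_one

theorem Kcomp_eq_thetaScale (J : IsJacobiTriple k sn cn dn) :
    Kcomp k = thetaScale (latticeRatio k) * (Real.pi / 2) := by
  rw [← Kcomp_thetaModulus J.latticeRatio_pos, J.thetaModulus_latticeRatio]

theorem sn_eq_thetaSn (J : IsJacobiTriple k sn cn dn) (x : ℝ) :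
    sn x = thetaSn (latticeRatio k) (x / thetaScale (latticeRatio k)) := by
  have Jtheta := isJacobiTriple_theta J.latticeRatio_pos
  rw [J.thetaModulus_latticeRatio] at Jtheta
  exact congrFun (J.unique Jtheta).1 x

theorem pi_mul_div_two_mul_Kcomp (J : IsJacobiTriple k sn cn dn) (x : ℝ) :
    Real.pi * x / (2 * Kcomp k) = x / thetaScale (latticeRatio k) := by
  rw [J.Kcomp_eq_thetaScale]
  field_simp

theorem THf_eq_theta₄ (J : IsJacobiTriple k sn cn dn) (x : ℝ) :
    THf k x = theta₄ (latticeRatio k) (x / thetaScale (latticeRatio k)) := by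
  rw [THf, nome_eq_exp, theta4R_eq_theta₄ J.latticeRatio_pos, J.pi_mul_div_two_mul_Kcomp]

theorem Hf_eq_theta₁ (J : IsJacobiTriple k sn cn dn) (x : ℝ) :
    Hf k x = theta₁ (latticeRatio k) (x / thetaScale (latticeRatio k)) := by
  rw [Hf, nome_eq_exp, theta1R_eq_theta₁ J.latticeRatio_pos, J.pi_mul_div_two_mul_Kcomp]

theorem THf_pos (J : IsJacobiTriple k sn cn dn) (x : ℝ) : 0 < THf k x :=
  J.THf_eq_theta₄ x ▸ theta₄_pos J.latticeRatio_pos _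

theorem contDiff_THf (J : IsJacobiTriple k sn cn dn) : ContDiff ℝ (⊤ : ℕ∞) (THf k) := by
  rw [funext J.THf_eq_theta₄]
  exact (contDiff_theta₄ J.latticeRatio_pos).comp (by fun_prop)

theorem contDiff_Hf (J : IsJacobiTriple k sn cn dn) : ContDiff ℝ (⊤ : ℕ∞) (Hf k) := by
  rw [funext J.Hf_eq_theta₁]
  exact (contDiff_theta₁ J.latticeRatio_pos).comp (by fun_prop)

theorem Hf_eq (J : IsJacobiTriple k sn cn dn) (x : ℝ) : Hf k x = √k * (THf k x * sn x) := by
  have ha := J.latticeRatio_pos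
  have hθ₂ := theta₂_zero_pos ha
  have hθ₃ := theta₃_pos ha 0
  have hθ₄ := theta₄_pos ha (x / thetaScale (latticeRatio k))
  have hsqrt : √k = theta₂ (latticeRatio k) 0 / theta₃ (latticeRatio k) 0 := by
    rw [← Real.sqrt_sq (div_pos hθ₂ hθ₃).le, div_pow, ← thetaModulus, J.thetaModulus_latticeRatio]
  rw [J.Hf_eq_theta₁, J.THf_eq_theta₄, J.sn_eq_thetaSn, hsqrt, thetaSn]
  field_simp

theorem THf_add_mul_THf_sub (J : IsJacobiTriple k sn cn dn) (x y : ℝ) :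
    THf k (x + y) * THf k (x - y) * THf k 0 ^ 2 =
      THf k x ^ 2 * THf k y ^ 2 * (1 - k ^ 2 * sn x ^ 2 * sn y ^ 2) := by
  have hprod := theta₄_add_mul_theta₄_sub_mul_theta₄_zero_sq J.latticeRatio_pos
    (x / thetaScale (latticeRatio k)) (y / thetaScale (latticeRatio k))
  rw [← add_div, ← sub_div, ← zero_div (thetaScale (latticeRatio k))] at hprod
  simp only [← J.THf_eq_theta₄, ← J.Hf_eq_theta₁, J.Hf_eq, mul_pow,
    Real.sq_sqrt J.modulus_pos.le] at hprod
  linear_combination hprod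

theorem hasDerivAt_thetaZeta (J : IsJacobiTriple k sn cn dn) (x : ℝ) :
    HasDerivAt (thetaZeta k)
      (deriv (deriv (theta₄ (latticeRatio k))) 0 / theta₄ (latticeRatio k) 0 /
        thetaScale (latticeRatio k) ^ 2 - k ^ 2 * sn x ^ 2) x := by
  have hscale := thetaScale_pos J.latticeRatio_pos
  refine (((hasDerivAt_logDeriv_theta₄ J.latticeRatio_pos
    (x / thetaScale (latticeRatio k))).comp x ((hasDerivAt_id x).div_const _)).div_const
      (thetaScale (latticeRatio k))).congr_deriv ?_
  rw [J.thetaModulus_latticeRatio, ← J.sn_eq_thetaSn]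
  field_simp

theorem thetaZeta_zero (J : IsJacobiTriple k sn cn dn) : thetaZeta k 0 = 0 := by
  rw [thetaZeta, zero_div, logDeriv_theta₄_zero J.latticeRatio_pos, zero_div]

theorem thetaZeta_Kcomp (J : IsJacobiTriple k sn cn dn) : thetaZeta k (Kcomp k) = 0 := by
  rw [thetaZeta, J.Kcomp_eq_thetaScale,
    mul_div_cancel_left₀ _ (thetaScale_pos J.latticeRatio_pos).ne',
    logDeriv_theta₄_pi_div_two J.latticeRatio_pos, zero_div]

/- Both sides have derivative `-k² sn²` up to a constant, and both vanish at `0` and at `K`. -/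
theorem thetaZeta_eq_Zjac (J : IsJacobiTriple k sn cn dn) (x : ℝ) :
    thetaZeta k x = Zjac k dn x := by
  obtain ⟨m, hm⟩ : ∃ m, ∀ y, HasDerivAt (fun y => thetaZeta k y - Zjac k dn y) m y :=
    ⟨_, fun y => ((J.hasDerivAt_thetaZeta y).sub (J.hasDerivAt_Zjac y)).congr_deriv (by
      rw [sub_right_comm 1, sub_sub_sub_cancel_right])⟩
  have hlinear (y : ℝ) : thetaZeta k y - Zjac k dn y = m * y := by
    have hdiff (y : ℝ) : HasDerivAt (fun y => thetaZeta k y - Zjac k dn y - m * y) 0 y :=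
      ((hm y).sub ((hasDerivAt_id' y).const_mul m)).congr_deriv (by ring)
    have h := eq_of_forall_hasDerivAt_zero hdiff y 0
    rw [J.thetaZeta_zero, Zjac_zero, mul_zero, sub_zero, sub_zero] at h
    exact sub_eq_zero.1 h
  have hslope : m = 0 := by
    have h := hlinear (Kcomp k)
    rw [J.thetaZeta_Kcomp, J.Zjac_Kcomp, sub_zero, eq_comm, mul_eq_zero] at h
    exact h.resolve_right (Kcomp_pos J.modulus_sq_lt_one).ne'
  rw [← sub_eq_zero, hlinear, hslope, zero_mul]

theorem hasDerivAt_THf (J : IsJacobiTriple k sn cn dn) (x : ℝ) :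
    HasDerivAt (THf k) (Zjac k dn x * THf k x) x := by
  have hθ₄ := theta₄_pos J.latticeRatio_pos (x / thetaScale (latticeRatio k))
  have hlog := J.thetaZeta_eq_Zjac x
  rw [thetaZeta, logDeriv_apply] at hlog
  rw [← hlog, funext J.THf_eq_theta₄]
  refine ((hasDerivAt_theta₄ J.latticeRatio_pos (x / thetaScale (latticeRatio k))).comp x
    ((hasDerivAt_id x).div_const (thetaScale (latticeRatio k)))).congr_deriv ?_
  field_simp

end IsJacobiTriple

/-! ### Space-time jets and Hirota's bilinear form of mKdV -/

/-- The partial derivatives `u, u_x, u_xx, u_xxx, u_t` of a function on space-time at a point: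
exactly those entering the mKdV equation. -/
@[ext]
structure SpaceTimeJet where
  val : ℝ
  dx : ℝ
  dxx : ℝ
  dxxx : ℝ
  dt : ℝ

namespace SpaceTimeJet

/-- The jet of a sum. -/
@[simps]
protected def add (a b : SpaceTimeJet) : SpaceTimeJet where
  val := a.val + b.val
  dx := a.dx + b.dx
  dxx := a.dxx + b.dxx
  dxxx := a.dxxx + b.dxxx
  dt := a.dt + b.dt

/-- The jet of a constant multiple. -/
@[simps]
def scale (r : ℝ) (a : SpaceTimeJet) : SpaceTimeJet where
  val := r * a.val
  dx := r * a.dx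
  dxx := r * a.dxx
  dxxx := r * a.dxxx
  dt := r * a.dt

/-- The jet of a product, by the Leibniz rule. -/
@[simps]
protected def mul (a b : SpaceTimeJet) : SpaceTimeJet where
  val := a.val * b.val
  dx := a.dx * b.val + a.val * b.dx
  dxx := a.dxx * b.val + 2 * a.dx * b.dx + a.val * b.dxx
  dxxx := a.dxxx * b.val + 3 * a.dxx * b.dx + 3 * a.dx * b.dxx + a.val * b.dxxx
  dt := a.dt * b.val + a.val * b.dt

/-- The jet of the quotient `u = a / b`, obtained by solving `u * b = a` order by order. -/
@[simps]
protected def div (a b : SpaceTimeJet) : SpaceTimeJet where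
  val := a.val / b.val
  dx := (a.dx - a.val / b.val * b.dx) / b.val
  dxx := (a.dxx - 2 * ((a.dx - a.val / b.val * b.dx) / b.val) * b.dx -
    a.val / b.val * b.dxx) / b.val
  dxxx := (a.dxxx - 3 * ((a.dxx - 2 * ((a.dx - a.val / b.val * b.dx) / b.val) * b.dx -
      a.val / b.val * b.dxx) / b.val) * b.dx -
    3 * ((a.dx - a.val / b.val * b.dx) / b.val) * b.dxx - a.val / b.val * b.dxxx) / b.val
  dt := (a.dt - a.val / b.val * b.dt) / b.val

theorem div_mul_cancel (a : SpaceTimeJet) {b : SpaceTimeJet} (hb : b.val ≠ 0) :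
    (a.div b).mul b = a := by
  ext <;> simp only [mul_val, mul_dx, mul_dxx, mul_dxxx, mul_dt, div_val, div_dx, div_dxx,
    div_dxxx, div_dt] <;> field_simp <;> ring

/-- Hirota's bilinear form `(D_t + D_x³ - 6 lam D_x) g · f`. -/
def hirotaMkdv (lam : ℝ) (g f : SpaceTimeJet) : ℝ :=
  g.dt * f.val - g.val * f.dt +
    (g.dxxx * f.val - 3 * g.dxx * f.dx + 3 * g.dx * f.dxx - g.val * f.dxxx) -
    6 * lam * (g.dx * f.val - g.val * f.dx)

theorem hirotaMkdv_add_left (lam : ℝ) (g g' f : SpaceTimeJet) :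
    hirotaMkdv lam (g.add g') f = hirotaMkdv lam g f + hirotaMkdv lam g' f := by
  simp only [hirotaMkdv, add_val, add_dx, add_dxx, add_dxxx, add_dt]
  ring

theorem hirotaMkdv_add_right (lam : ℝ) (g f f' : SpaceTimeJet) :
    hirotaMkdv lam g (f.add f') = hirotaMkdv lam g f + hirotaMkdv lam g f' := by
  simp only [hirotaMkdv, add_val, add_dx, add_dxx, add_dxxx, add_dt]
  ring

theorem hirotaMkdv_scale_left (lam r : ℝ) (g f : SpaceTimeJet) :
    hirotaMkdv lam (g.scale r) f = r * hirotaMkdv lam g f := by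
  simp only [hirotaMkdv, scale_val, scale_dx, scale_dxx, scale_dxxx, scale_dt]
  ring

theorem hirotaMkdv_scale_right (lam r : ℝ) (g f : SpaceTimeJet) :
    hirotaMkdv lam g (f.scale r) = r * hirotaMkdv lam g f := by
  simp only [hirotaMkdv, scale_val, scale_dx, scale_dxx, scale_dxxx, scale_dt]
  ring

theorem hirotaMkdv_mul_self (lam : ℝ) (u f : SpaceTimeJet) :
    hirotaMkdv lam (u.mul f) f =
      f.val ^ 2 * (u.dt - 6 * u.val ^ 2 * u.dx + u.dxxx) +
        6 * u.dx * (f.val * f.dxx - f.dx ^ 2 + (u.mul f).val ^ 2 - lam * f.val ^ 2) := by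
  simp only [hirotaMkdv, mul_val, mul_dx, mul_dxx, mul_dxxx, mul_dt]
  ring

theorem mkdv_div_of_hirota {lam : ℝ} {g f : SpaceTimeJet} (hf : f.val ≠ 0)
    (hsq : f.val * f.dxx - f.dx ^ 2 + g.val ^ 2 = lam * f.val ^ 2)
    (hcubic : hirotaMkdv lam g f = 0) :
    (g.div f).dt - 6 * (g.div f).val ^ 2 * (g.div f).dx + (g.div f).dxxx = 0 := by
  have h := hirotaMkdv_mul_self lam (g.div f) f
  rw [div_mul_cancel g hf, hcubic, hsq, sub_self, mul_zero, add_zero] at h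
  exact (mul_eq_zero.1 h.symm).resolve_left (pow_ne_zero 2 hf)

/-- A field of jets is holonomic if its entries are the partial derivatives of its values. -/
structure IsHolonomic (j : ℝ × ℝ → SpaceTimeJet) : Prop where
  hasDerivAt_val : ∀ w : ℝ × ℝ, HasDerivAt (fun y => (j (y, w.2)).val) (j w).dx w.1
  hasDerivAt_dx : ∀ w : ℝ × ℝ, HasDerivAt (fun y => (j (y, w.2)).dx) (j w).dxx w.1
  hasDerivAt_dxx : ∀ w : ℝ × ℝ, HasDerivAt (fun y => (j (y, w.2)).dxx) (j w).dxxx w.1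
  hasDerivAt_dt : ∀ w : ℝ × ℝ, HasDerivAt (fun s => (j (w.1, s)).val) (j w).dt w.2

namespace IsHolonomic

variable {a b : ℝ × ℝ → SpaceTimeJet}

theorem ux_eq (ha : IsHolonomic a) : ux (fun w => (a w).val) = fun w => (a w).dx :=
  funext fun w => (ha.hasDerivAt_val w).deriv

theorem ux_ux_ux_eq (ha : IsHolonomic a) :
    ux (ux (ux fun w => (a w).val)) = fun w => (a w).dxxx := by
  have hdx : ux (fun w => (a w).dx) = fun w => (a w).dxx :=
    funext fun w => (ha.hasDerivAt_dx w).deriv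
  rw [ha.ux_eq, hdx]
  exact funext fun w => (ha.hasDerivAt_dxx w).deriv

theorem ut_eq (ha : IsHolonomic a) : ut (fun w => (a w).val) = fun w => (a w).dt :=
  funext fun w => (ha.hasDerivAt_dt w).deriv

protected theorem add (ha : IsHolonomic a) (hb : IsHolonomic b) :
    IsHolonomic fun w => (a w).add (b w) where
  hasDerivAt_val w := (ha.hasDerivAt_val w).add (hb.hasDerivAt_val w)
  hasDerivAt_dx w := (ha.hasDerivAt_dx w).add (hb.hasDerivAt_dx w)
  hasDerivAt_dxx w := (ha.hasDerivAt_dxx w).add (hb.hasDerivAt_dxx w)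
  hasDerivAt_dt w := (ha.hasDerivAt_dt w).add (hb.hasDerivAt_dt w)

theorem scale (ha : IsHolonomic a) (r : ℝ) : IsHolonomic fun w => (a w).scale r where
  hasDerivAt_val w := (ha.hasDerivAt_val w).const_mul r
  hasDerivAt_dx w := (ha.hasDerivAt_dx w).const_mul r
  hasDerivAt_dxx w := (ha.hasDerivAt_dxx w).const_mul r
  hasDerivAt_dt w := (ha.hasDerivAt_dt w).const_mul r

protected theorem mul (ha : IsHolonomic a) (hb : IsHolonomic b) :
    IsHolonomic fun w => (a w).mul (b w) where
  hasDerivAt_val w := (ha.hasDerivAt_val w).mul (hb.hasDerivAt_val w)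
  hasDerivAt_dx w := by
    refine (((ha.hasDerivAt_dx w).mul (hb.hasDerivAt_val w)).add
      ((ha.hasDerivAt_val w).mul (hb.hasDerivAt_dx w))).congr_deriv ?_
    simp only [mul_dxx]
    ring
  hasDerivAt_dxx w := by
    refine ((((ha.hasDerivAt_dxx w).mul (hb.hasDerivAt_val w)).add
      (((ha.hasDerivAt_dx w).const_mul 2).mul (hb.hasDerivAt_dx w))).add
      ((ha.hasDerivAt_val w).mul (hb.hasDerivAt_dxx w))).congr_deriv ?_
    simp only [mul_dxxx]
    ring
  hasDerivAt_dt w := (ha.hasDerivAt_dt w).mul (hb.hasDerivAt_dt w)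

protected theorem div (ha : IsHolonomic a) (hb : IsHolonomic b) (hb0 : ∀ w, (b w).val ≠ 0) :
    IsHolonomic fun w => (a w).div (b w) := by
  have hval : ∀ w : ℝ × ℝ,
      HasDerivAt (fun y => ((a (y, w.2)).div (b (y, w.2))).val) ((a w).div (b w)).dx w.1 := by
    intro w
    have := hb0 w
    refine ((ha.hasDerivAt_val w).div (hb.hasDerivAt_val w) this).congr_deriv ?_
    simp only [div_dx]
    field_simp
  have hdx : ∀ w : ℝ × ℝ,
      HasDerivAt (fun y => ((a (y, w.2)).div (b (y, w.2))).dx) ((a w).div (b w)).dxx w.1 := by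
    intro w
    have := hb0 w
    refine (((ha.hasDerivAt_dx w).sub ((hval w).mul (hb.hasDerivAt_dx w))).div
      (hb.hasDerivAt_val w) this).congr_deriv ?_
    simp only [div_val, div_dx, div_dxx, Pi.sub_apply, Pi.mul_apply]
    field_simp
    ring
  refine ⟨hval, hdx, fun w => ?_, fun w => ?_⟩
  · have := hb0 w
    refine ((((ha.hasDerivAt_dxx w).sub (((hdx w).const_mul 2).mul (hb.hasDerivAt_dx w))).sub
      ((hval w).mul (hb.hasDerivAt_dxx w))).div (hb.hasDerivAt_val w) this).congr_deriv ?_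
    simp only [div_val, div_dx, div_dxx, div_dxxx, Pi.sub_apply, Pi.mul_apply]
    field_simp
    ring
  · have := hb0 w
    refine ((ha.hasDerivAt_dt w).div (hb.hasDerivAt_dt w) this).congr_deriv ?_
    simp only [div_dt]
    field_simp

end IsHolonomic

theorem mkdv_of_hirota {f g : ℝ × ℝ → SpaceTimeJet} (hf : IsHolonomic f) (hg : IsHolonomic g)
    (hf0 : ∀ w, (f w).val ≠ 0) {lam : ℝ}
    (hsq : ∀ w, (f w).val * (f w).dxx - (f w).dx ^ 2 + (g w).val ^ 2 = lam * (f w).val ^ 2)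
    (hcubic : ∀ w, hirotaMkdv lam (g w) (f w) = 0) (w : ℝ × ℝ) :
    ut (fun w => (g w).val / (f w).val) w -
        6 * ((g w).val / (f w).val) ^ 2 * ux (fun w => (g w).val / (f w).val) w +
      ux (ux (ux fun w => (g w).val / (f w).val)) w = 0 := by
  have hu := hg.div hf hf0
  have hmkdv := mkdv_div_of_hirota (hf0 w) (hsq w) (hcubic w)
  rwa [← congrFun hu.ut_eq w, ← congrFun hu.ux_eq w, ← congrFun hu.ux_ux_ux_eq w] at hmkdv

/-- The jet of a travelling wave `φ(x + v t + b)`. -/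
@[simps]
def travelling (φ φ' φ'' φ''' : ℝ → ℝ) (v b : ℝ) (w : ℝ × ℝ) : SpaceTimeJet where
  val := φ (w.1 + v * w.2 + b)
  dx := φ' (w.1 + v * w.2 + b)
  dxx := φ'' (w.1 + v * w.2 + b)
  dxxx := φ''' (w.1 + v * w.2 + b)
  dt := v * φ' (w.1 + v * w.2 + b)

theorem isHolonomic_travelling {φ φ' φ'' φ''' : ℝ → ℝ} (h : ∀ y, HasDerivAt φ (φ' y) y)
    (h' : ∀ y, HasDerivAt φ' (φ'' y) y) (h'' : ∀ y, HasDerivAt φ'' (φ''' y) y) (v b : ℝ) :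
    IsHolonomic (travelling φ φ' φ'' φ''' v b) := by
  have hspace : ∀ {ψ ψ' : ℝ → ℝ}, (∀ y, HasDerivAt ψ (ψ' y) y) → ∀ w : ℝ × ℝ,
      HasDerivAt (fun y => ψ (y + v * w.2 + b)) (ψ' (w.1 + v * w.2 + b)) w.1 := by
    intro ψ ψ' hψ w
    have hphase := ((hasDerivAt_id' w.1).add_const (v * w.2)).add_const b
    exact ((hψ _).comp w.1 hphase).congr_deriv (mul_one _)
  refine ⟨hspace h, hspace h', hspace h'', fun w => ?_⟩
  have hphase := (((hasDerivAt_id' w.2).const_mul v).const_add w.1).add_const b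
  exact ((h _).comp w.2 hphase).congr_deriv (by rw [mul_one, mul_comm, travelling_dt])

end SpaceTimeJet

/-! ### Theta modes -/

/-- The data at a point of a mode `T = Θ(ξ + σ) e^{m (x + v t + x₀)}`: its value `amp = T`, the
zeta function `zeta = Θ'/Θ` and the elliptic functions `sn` and `sn' = cn · dn` at `ξ + σ`, and the
exponential rate `rate = m`. -/
structure ThetaMode where
  amp : ℝ
  zeta : ℝ
  rate : ℝ
  sn : ℝ
  sn' : ℝ

namespace ThetaMode

/-- The jet of `T`, where `lam - k² sn²` is the derivative of the zeta function. -/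
@[simps]
def jet (k lam v : ℝ) (M : ThetaMode) : SpaceTimeJet where
  val := M.amp
  dx := M.amp * (M.zeta + M.rate)
  dxx := M.amp * ((M.zeta + M.rate) ^ 2 + (lam - k ^ 2 * M.sn ^ 2))
  dxxx := M.amp * ((M.zeta + M.rate) ^ 3 +
    3 * (M.zeta + M.rate) * (lam - k ^ 2 * M.sn ^ 2) - 2 * k ^ 2 * M.sn * M.sn')
  dt := M.amp * ((1 + k ^ 2) * M.zeta + M.rate * v)

/-- The jet of `sn(ξ + σ)`. -/
@[simps]
def snJet (k : ℝ) (M : ThetaMode) : SpaceTimeJet where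
  val := M.sn
  dx := M.sn'
  dxx := -(1 + k ^ 2) * M.sn + 2 * k ^ 2 * M.sn ^ 3
  dxxx := (-(1 + k ^ 2) + 6 * k ^ 2 * M.sn ^ 2) * M.sn'
  dt := (1 + k ^ 2) * M.sn'

end ThetaMode

/-- The bilinear form `hirotaMkdv` of `T₁ sn₁` and `T₂`, divided by `T₁ T₂`. Here `D` is the
difference of the logarithmic derivatives of the two modes and `μ` that of their frequencies in the
frame moving with the background. -/
def crossHirota (k s₁ s₂ t₁ t₂ D μ : ℝ) : ℝ :=
  t₁ * (3 * D ^ 2 + 3 * k ^ 2 * (s₁ ^ 2 - s₂ ^ 2) - 2 * k ^ 2 * s₁ ^ 2) +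
    2 * k ^ 2 * s₁ * s₂ * t₂ + D * s₁ * (D ^ 2 - 2 * (1 + k ^ 2) + 3 * k ^ 2 * (s₁ ^ 2 - s₂ ^ 2)) +
    μ * s₁

theorem crossHirota_self (k s t : ℝ) : crossHirota k s s t t 0 0 = 0 := by
  unfold crossHirota
  ring

open SpaceTimeJet in
theorem ThetaMode.hirotaMkdv_mul_snJet (k lam v : ℝ) (M N : ThetaMode) :
    hirotaMkdv lam ((M.jet k lam v).mul (M.snJet k)) (N.jet k lam v) =
      M.amp * N.amp * crossHirota k M.sn N.sn M.sn' N.sn'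
        (M.zeta + M.rate - (N.zeta + N.rate)) ((M.rate - N.rate) * (v - (1 + k ^ 2))) := by
  simp only [hirotaMkdv, crossHirota, mul_val, mul_dx, mul_dxx, mul_dxxx, mul_dt, jet_val, jet_dx,
    jet_dxx, jet_dxxx, jet_dt, snJet_val, snJet_dx, snJet_dxx, snJet_dxxx, snJet_dt]
  ring

/-- The denominator `T₀ + T₂ + 2γ T₁` of the breather, as a jet. -/
def breatherDenJet (k lam v γ : ℝ) (M₀ M₁ M₂ : ThetaMode) : SpaceTimeJet :=
  ((M₀.jet k lam v).add (M₂.jet k lam v)).add ((M₁.jet k lam v).scale (2 * γ))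

/-- The numerator `k (T₀ sn₀ + T₂ sn₂ + 2γr T₁ sn₁)` of the breather, as a jet; `r = β / γ`. -/
def breatherNumJet (k lam v γ r : ℝ) (M₀ M₁ M₂ : ThetaMode) : SpaceTimeJet :=
  ((((M₀.jet k lam v).mul (M₀.snJet k)).add ((M₂.jet k lam v).mul (M₂.snJet k))).add
    (((M₁.jet k lam v).mul (M₁.snJet k)).scale (2 * γ * r))).scale k

section Breather

variable {k lam v γ r : ℝ} {M₀ M₁ M₂ : ThetaMode}

open SpaceTimeJet ThetaMode

theorem breatherJet_hirota_sq {N : ℝ} (hamp : M₀.amp * M₂.amp = γ ^ 2 * M₁.amp ^ 2 * N)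
    (h₀₁ : (M₀.zeta + M₀.rate - (M₁.zeta + M₁.rate)) ^ 2 - k ^ 2 * (M₀.sn ^ 2 + M₁.sn ^ 2) +
      2 * k ^ 2 * r * M₀.sn * M₁.sn = 0)
    (h₁₂ : (M₁.zeta + M₁.rate - (M₂.zeta + M₂.rate)) ^ 2 - k ^ 2 * (M₁.sn ^ 2 + M₂.sn ^ 2) +
      2 * k ^ 2 * r * M₁.sn * M₂.sn = 0)
    (h₀₂ : N * ((M₀.zeta + M₀.rate - (M₂.zeta + M₂.rate)) ^ 2 - k ^ 2 * (M₀.sn ^ 2 + M₂.sn ^ 2) +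
      2 * k ^ 2 * M₀.sn * M₂.sn) + 4 * k ^ 2 * M₁.sn ^ 2 * (r ^ 2 - 1) = 0) :
    (breatherDenJet k lam v γ M₀ M₁ M₂).val * (breatherDenJet k lam v γ M₀ M₁ M₂).dxx -
        (breatherDenJet k lam v γ M₀ M₁ M₂).dx ^ 2 +
        (breatherNumJet k lam v γ r M₀ M₁ M₂).val ^ 2 =
      lam * (breatherDenJet k lam v γ M₀ M₁ M₂).val ^ 2 := by
  simp only [breatherDenJet, breatherNumJet, add_val, add_dx, add_dxx, scale_val, scale_dx,
    scale_dxx, mul_val, jet_val, jet_dx, jet_dxx, snJet_val]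
  linear_combination 2 * γ * M₀.amp * M₁.amp * h₀₁ + 2 * γ * M₁.amp * M₂.amp * h₁₂ +
    γ ^ 2 * M₁.amp ^ 2 * h₀₂ +
    ((M₀.zeta + M₀.rate - (M₂.zeta + M₂.rate)) ^ 2 - k ^ 2 * (M₀.sn ^ 2 + M₂.sn ^ 2) +
      2 * k ^ 2 * M₀.sn * M₂.sn) * hamp

theorem breatherJet_hirotaMkdv
    (h₀₁ : hirotaMkdv lam ((M₀.jet k lam v).mul (M₀.snJet k)) (M₁.jet k lam v) = 0)
    (h₁₀ : hirotaMkdv lam ((M₁.jet k lam v).mul (M₁.snJet k)) (M₀.jet k lam v) = 0)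
    (h₁₂ : hirotaMkdv lam ((M₁.jet k lam v).mul (M₁.snJet k)) (M₂.jet k lam v) = 0)
    (h₂₁ : hirotaMkdv lam ((M₂.jet k lam v).mul (M₂.snJet k)) (M₁.jet k lam v) = 0)
    (h₀₂ : hirotaMkdv lam ((M₀.jet k lam v).mul (M₀.snJet k)) (M₂.jet k lam v) +
      hirotaMkdv lam ((M₂.jet k lam v).mul (M₂.snJet k)) (M₀.jet k lam v) = 0) :
    hirotaMkdv lam (breatherNumJet k lam v γ r M₀ M₁ M₂)
      (breatherDenJet k lam v γ M₀ M₁ M₂) = 0 := by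
  have hself : ∀ M : ThetaMode,
      hirotaMkdv lam ((M.jet k lam v).mul (M.snJet k)) (M.jet k lam v) = 0 := fun M => by
    rw [M.hirotaMkdv_mul_snJet, sub_self, sub_self, zero_mul, crossHirota_self, mul_zero]
  simp only [breatherNumJet, breatherDenJet, hirotaMkdv_add_left, hirotaMkdv_add_right,
    hirotaMkdv_scale_left, hirotaMkdv_scale_right, hself, h₀₁, h₁₀, h₁₂, h₂₁]
  linear_combination k * h₀₂

end Breather

/-! ### Quadratic and cubic relations between shifted modes -/

/-- With `p = sn X`, `s = sn y` and `G = cn y · dn y`, the coefficient of `cn X · dn X` in the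
value of `crossHirota` at the pair of points `X + y`, `X - y`. -/
def crossHirotaOdd (k p s G D μ : ℝ) : ℝ :=
  let N := 1 - k ^ 2 * p ^ 2 * s ^ 2
  let h := (1 - p ^ 2) * (1 - k ^ 2 * p ^ 2)
  let a := p * G / N
  let b := s / N
  let c := G * (1 + k ^ 2 * p ^ 2 * s ^ 2) / N ^ 2
  let e := s * p * ((-(1 + k ^ 2) + 2 * k ^ 2 * p ^ 2) * N + 2 * k ^ 2 * s ^ 2 * h) / N ^ 2
  c * (3 * D ^ 2 - 4 * k ^ 2 * b ^ 2 * h) + 8 * k ^ 2 * e * a * b +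
    D * b * (D ^ 2 - 2 * (1 + k ^ 2) + 12 * k ^ 2 * a ^ 2) + μ * b

/-- The part of `crossHirota` that is even in `cn X · dn X`, with the notation of
`crossHirotaOdd`. -/
def crossHirotaEven (k p s G D μ : ℝ) : ℝ :=
  let N := 1 - k ^ 2 * p ^ 2 * s ^ 2
  let h := (1 - p ^ 2) * (1 - k ^ 2 * p ^ 2)
  let a := p * G / N
  let b := s / N
  let c := G * (1 + k ^ 2 * p ^ 2 * s ^ 2) / N ^ 2
  let e := s * p * ((-(1 + k ^ 2) + 2 * k ^ 2 * p ^ 2) * N + 2 * k ^ 2 * s ^ 2 * h) / N ^ 2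
  8 * k ^ 2 * a * b * c * h + e * (3 * D ^ 2 - 4 * k ^ 2 * a ^ 2) +
    D * a * (D ^ 2 - 2 * (1 + k ^ 2) + 12 * k ^ 2 * b ^ 2 * h) + μ * a

theorem crossHirotaOdd_of_half_shift {k p s G : ℝ} (hN : 1 - k ^ 2 * p ^ 2 * s ^ 2 ≠ 0)
    (hM : 1 + k * s ^ 2 ≠ 0) (hG : G ^ 2 = (1 - s ^ 2) * (1 - k ^ 2 * s ^ 2)) :
    crossHirotaOdd k p s G
      (-2 * k * s * G * (1 + k * p ^ 2) / ((1 + k * s ^ 2) * (1 - k ^ 2 * p ^ 2 * s ^ 2)))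
      (-4 * k * (1 + k) ^ 2 * (1 - k * s ^ 2) * s * G / (1 + k * s ^ 2) ^ 3) = 0 := by
  simp only [crossHirotaOdd, mul_pow, div_pow, hG]
  field_simp
  ring

theorem crossHirotaEven_of_half_shift {k p s G : ℝ} (hN : 1 - k ^ 2 * p ^ 2 * s ^ 2 ≠ 0)
    (hM : 1 + k * s ^ 2 ≠ 0) (hG : G ^ 2 = (1 - s ^ 2) * (1 - k ^ 2 * s ^ 2)) :
    crossHirotaEven k p s G
      (-2 * k * s * G * (1 + k * p ^ 2) / ((1 + k * s ^ 2) * (1 - k ^ 2 * p ^ 2 * s ^ 2)))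
      (-4 * k * (1 + k) ^ 2 * (1 - k * s ^ 2) * s * G / (1 + k * s ^ 2) ^ 3) = 0 := by
  simp only [crossHirotaEven, mul_pow, div_pow, hG]
  field_simp
  simp only [hG]
  ring

theorem crossHirotaOdd_of_full_shift {k p s G : ℝ} (hN : 1 - k ^ 2 * p ^ 2 * s ^ 2 ≠ 0)
    (hG : G ^ 2 = (1 - s ^ 2) * (1 - k ^ 2 * s ^ 2)) :
    crossHirotaOdd k p s G (-2 * k * s * (1 + k * p ^ 2 * G / (1 - k ^ 2 * p ^ 2 * s ^ 2)))
      (-4 * k * s * (1 + k ^ 2 + 2 * k * G - 2 * k ^ 2 * s ^ 2)) = 0 := by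
  have hG3 : G ^ 3 = (1 - s ^ 2) * (1 - k ^ 2 * s ^ 2) * G := by rw [← hG]; ring
  simp only [crossHirotaOdd]
  field_simp
  ring_nf
  simp only [hG3]
  ring

/-- The ratio `β / γ` of the two parameters of the breather. -/
def betaRatio (k : ℝ) (sn : ℝ → ℝ) (α : ℝ) : ℝ :=
  1 - 2 * (1 + k) ^ 2 * sn α ^ 2 / (1 + k * sn α ^ 2) ^ 2

namespace IsJacobiTriple

variable {k : ℝ} {sn cn dn : ℝ → ℝ}

theorem crossHirota_add_sub (J : IsJacobiTriple k sn cn dn) (x y D μ : ℝ) :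
    crossHirota k (sn (x + y)) (sn (x - y)) (cn (x + y) * dn (x + y)) (cn (x - y) * dn (x - y))
        D μ =
      cn x * dn x * crossHirotaOdd k (sn x) (sn y) (cn y * dn y) D μ +
        crossHirotaEven k (sn x) (sn y) (cn y * dn y) D μ := by
  rw [J.sn_add, J.sn_sub, J.cn_mul_dn_add, J.cn_mul_dn_sub]
  simp only [crossHirota, crossHirotaOdd, crossHirotaEven]
  set N := 1 - k ^ 2 * sn x ^ 2 * sn y ^ 2
  set G := cn y * dn y
  linear_combination (-4 * k ^ 2 * (sn y / N) ^ 2 * (cn x * dn x) *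
      (G * (1 + k ^ 2 * sn x ^ 2 * sn y ^ 2) / N ^ 2) +
    8 * k ^ 2 * (sn x * G / N) * (sn y / N) * (G * (1 + k ^ 2 * sn x ^ 2 * sn y ^ 2) / N ^ 2) +
    12 * k ^ 2 * (sn y / N) ^ 2 * D * (sn x * G / N)) * J.cn_mul_dn_sq x

theorem crossHirota_sub_add (J : IsJacobiTriple k sn cn dn) (x y D μ : ℝ) :
    crossHirota k (sn (x - y)) (sn (x + y)) (cn (x - y) * dn (x - y)) (cn (x + y) * dn (x + y))
        (-D) (-μ) =
      cn x * dn x * crossHirotaOdd k (sn x) (sn y) (cn y * dn y) D μ -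
        crossHirotaEven k (sn x) (sn y) (cn y * dn y) D μ := by
  have h := J.crossHirota_add_sub (-x) y D μ
  rw [neg_add_eq_sub, ← neg_sub x y, ← neg_add', J.sn_neg, J.sn_neg, J.sn_neg, J.cn_neg, J.cn_neg,
    J.cn_neg, J.dn_neg, J.dn_neg, J.dn_neg] at h
  simp only [crossHirota, crossHirotaOdd, crossHirotaEven] at h ⊢
  linear_combination h

theorem kapWidth_mul_cSpeed_sub (J : IsJacobiTriple k sn cn dn) {α : ℝ}
    (hκ : kapWidth k sn cn dn α ≠ 0) :
    kapWidth k sn cn dn α * (cSpeed k sn cn dn α - (1 + k ^ 2)) =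
      2 * k * (1 + k) ^ 2 * (1 - k * sn α ^ 2) * sn α * (cn α * dn α) / (1 + k * sn α ^ 2) ^ 3 := by
  have hM := (J.one_add_mul_sn_sq_pos α).ne'
  have hden : Zjac k dn α * (1 + k * sn α ^ 2) + k * sn α * dn α * cn α =
      kapWidth k sn cn dn α * (1 + k * sn α ^ 2) := by
    unfold kapWidth
    field_simp
  rw [cSpeed, hden]
  field_simp
  ring

theorem Zjac_add_sub_Zjac_sub_kapWidth (J : IsJacobiTriple k sn cn dn) (x α : ℝ) :
    Zjac k dn (x + α) - Zjac k dn (x - α) - 2 * kapWidth k sn cn dn α =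
      -2 * k * sn α * (cn α * dn α) * (1 + k * sn x ^ 2) /
        ((1 + k * sn α ^ 2) * (1 - k ^ 2 * sn x ^ 2 * sn α ^ 2)) := by
  have hN := (J.one_sub_sq_mul_sn_sq_pos x α).ne'
  have hM := (J.one_add_mul_sn_sq_pos α).ne'
  rw [J.Zjac_add_sub_Zjac_sub, kapWidth]
  field_simp
  ring

theorem two_mul_kapWidth (J : IsJacobiTriple k sn cn dn) (α : ℝ) :
    2 * kapWidth k sn cn dn α = Zjac k dn (2 * α) + k * sn (2 * α) := by
  have hm := (J.one_sub_mul_sn_sq_pos α).ne'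
  have hM := (J.one_add_mul_sn_sq_pos α).ne'
  have hZ : Zjac k dn (2 * α) = 2 * Zjac k dn α - k ^ 2 * sn α ^ 2 * sn (2 * α) := by
    rw [two_mul, J.Zjac_add]
    ring
  rw [hZ, J.sn_two_mul, kapWidth]
  field_simp
  ring

theorem Zjac_add_sub_Zjac_sub_two_kapWidth (J : IsJacobiTriple k sn cn dn) (x α : ℝ) :
    Zjac k dn (x + 2 * α) - Zjac k dn (x - 2 * α) - 4 * kapWidth k sn cn dn α =
      -2 * k * sn (2 * α) * (1 + k * sn x ^ 2 * (cn (2 * α) * dn (2 * α)) /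
        (1 - k ^ 2 * sn x ^ 2 * sn (2 * α) ^ 2)) := by
  rw [J.Zjac_add_sub_Zjac_sub]
  linear_combination -2 * J.two_mul_kapWidth α

theorem quadratic_relation_half_shift (J : IsJacobiTriple k sn cn dn) (x α : ℝ) :
    (Zjac k dn (x + α) - Zjac k dn (x - α) - 2 * kapWidth k sn cn dn α) ^ 2 -
        k ^ 2 * (sn (x + α) ^ 2 + sn (x - α) ^ 2) +
      2 * k ^ 2 * betaRatio k sn α * sn (x + α) * sn (x - α) = 0 := by
  have hM := (J.one_add_mul_sn_sq_pos α).ne'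
  rw [betaRatio, J.Zjac_add_sub_Zjac_sub_kapWidth, J.sn_add, J.sn_sub]
  have hx := J.cn_mul_dn_sq x
  have hα := J.cn_mul_dn_sq α
  set H := cn x * dn x
  set G := cn α * dn α
  field_simp
  ring_nf
  simp only [hx, hα]
  ring

theorem quadratic_relation_full_shift (J : IsJacobiTriple k sn cn dn) (x α : ℝ) :
    (1 - k ^ 2 * sn x ^ 2 * sn (2 * α) ^ 2) *
        ((Zjac k dn (x + 2 * α) - Zjac k dn (x - 2 * α) - 4 * kapWidth k sn cn dn α) ^ 2 -
          k ^ 2 * (sn (x + 2 * α) ^ 2 + sn (x - 2 * α) ^ 2) +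
          2 * k ^ 2 * sn (x + 2 * α) * sn (x - 2 * α)) +
      4 * k ^ 2 * sn x ^ 2 * (betaRatio k sn α ^ 2 - 1) = 0 := by
  have hm := (J.one_sub_mul_sn_sq_pos α).ne'
  have hM := (J.one_add_mul_sn_sq_pos α).ne'
  have hr : betaRatio k sn α ^ 2 - 1 =
      -sn (2 * α) ^ 2 *
        (1 + k ^ 2 + 2 * k * (cn (2 * α) * dn (2 * α)) - 2 * k ^ 2 * sn (2 * α) ^ 2) := by
    rw [betaRatio, J.cn_mul_dn_two_mul, J.sn_two_mul, div_pow, mul_pow _ (cn α * dn α),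
      J.cn_mul_dn_sq]
    field_simp
    ring
  have hN := (J.one_sub_sq_mul_sn_sq_pos x (2 * α)).ne'
  rw [hr, J.Zjac_add_sub_Zjac_sub_two_kapWidth, J.sn_add, J.sn_sub]
  have hx := J.cn_mul_dn_sq x
  have hα := J.cn_mul_dn_sq (2 * α)
  set H := cn x * dn x
  set G := cn (2 * α) * dn (2 * α)
  set S := sn (2 * α)
  field_simp
  ring_nf
  simp only [hx, hα]
  ring

theorem crossHirota_half_shift (J : IsJacobiTriple k sn cn dn) {α : ℝ}
    (hκ : kapWidth k sn cn dn α ≠ 0) (x : ℝ) :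
    crossHirota k (sn (x + α)) (sn (x - α)) (cn (x + α) * dn (x + α)) (cn (x - α) * dn (x - α))
        (Zjac k dn (x + α) - Zjac k dn (x - α) - 2 * kapWidth k sn cn dn α)
        (-2 * kapWidth k sn cn dn α * (cSpeed k sn cn dn α - (1 + k ^ 2))) = 0 ∧
      crossHirota k (sn (x - α)) (sn (x + α)) (cn (x - α) * dn (x - α)) (cn (x + α) * dn (x + α))
        (-(Zjac k dn (x + α) - Zjac k dn (x - α) - 2 * kapWidth k sn cn dn α))
        (-(-2 * kapWidth k sn cn dn α * (cSpeed k sn cn dn α - (1 + k ^ 2)))) = 0 := by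
  have hN := (J.one_sub_sq_mul_sn_sq_pos x α).ne'
  have hM := (J.one_add_mul_sn_sq_pos α).ne'
  have hμ : -2 * kapWidth k sn cn dn α * (cSpeed k sn cn dn α - (1 + k ^ 2)) =
      -4 * k * (1 + k) ^ 2 * (1 - k * sn α ^ 2) * sn α * (cn α * dn α) /
        (1 + k * sn α ^ 2) ^ 3 := by
    rw [mul_assoc, J.kapWidth_mul_cSpeed_sub hκ]
    ring
  rw [J.crossHirota_add_sub, J.crossHirota_sub_add, J.Zjac_add_sub_Zjac_sub_kapWidth, hμ,
    crossHirotaOdd_of_half_shift hN hM (J.cn_mul_dn_sq α),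
    crossHirotaEven_of_half_shift hN hM (J.cn_mul_dn_sq α)]
  simp only [mul_zero, add_zero, sub_zero, and_self]

theorem crossHirota_full_shift (J : IsJacobiTriple k sn cn dn) {α : ℝ}
    (hκ : kapWidth k sn cn dn α ≠ 0) (x : ℝ) :
    crossHirota k (sn (x + 2 * α)) (sn (x - 2 * α)) (cn (x + 2 * α) * dn (x + 2 * α))
        (cn (x - 2 * α) * dn (x - 2 * α))
        (Zjac k dn (x + 2 * α) - Zjac k dn (x - 2 * α) - 4 * kapWidth k sn cn dn α)
        (-4 * kapWidth k sn cn dn α * (cSpeed k sn cn dn α - (1 + k ^ 2))) +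
      crossHirota k (sn (x - 2 * α)) (sn (x + 2 * α)) (cn (x - 2 * α) * dn (x - 2 * α))
        (cn (x + 2 * α) * dn (x + 2 * α))
        (-(Zjac k dn (x + 2 * α) - Zjac k dn (x - 2 * α) - 4 * kapWidth k sn cn dn α))
        (-(-4 * kapWidth k sn cn dn α * (cSpeed k sn cn dn α - (1 + k ^ 2)))) = 0 := by
  have hm := (J.one_sub_mul_sn_sq_pos α).ne'
  have hM := (J.one_add_mul_sn_sq_pos α).ne'
  have hμ : -4 * kapWidth k sn cn dn α * (cSpeed k sn cn dn α - (1 + k ^ 2)) =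
      -4 * k * sn (2 * α) *
        (1 + k ^ 2 + 2 * k * (cn (2 * α) * dn (2 * α)) - 2 * k ^ 2 * sn (2 * α) ^ 2) := by
    rw [mul_assoc, J.kapWidth_mul_cSpeed_sub hκ, J.cn_mul_dn_two_mul, J.sn_two_mul]
    field_simp
  rw [J.crossHirota_add_sub, J.crossHirota_sub_add, J.Zjac_add_sub_Zjac_sub_two_kapWidth, hμ,
    crossHirotaOdd_of_full_shift (J.one_sub_sq_mul_sn_sq_pos x (2 * α)).ne'
      (J.cn_mul_dn_sq (2 * α))]
  ring

end IsJacobiTriple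

/-! ### The dark breather -/

/-- The mode `Θ(ξ + σ) e^{m (x + v t + x₀)}` at the point `w = (x, t)`. -/
@[simps]
def thetaModeAt (k : ℝ) (sn cn dn : ℝ → ℝ) (v x₀ σ m : ℝ) (w : ℝ × ℝ) : ThetaMode where
  amp := THf k (xiVar k w + σ) * Real.exp (m * (w.1 + v * w.2 + x₀))
  zeta := Zjac k dn (xiVar k w + σ)
  rate := m
  sn := sn (xiVar k w + σ)
  sn' := cn (xiVar k w + σ) * dn (xiVar k w + σ)

open SpaceTimeJet in
theorem isHolonomic_travelling_exp (m v x₀ : ℝ) :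
    IsHolonomic (travelling (fun y => Real.exp (m * y)) (fun y => m * Real.exp (m * y))
      (fun y => m ^ 2 * Real.exp (m * y)) (fun y => m ^ 3 * Real.exp (m * y)) v x₀) := by
  have hexp (c y : ℝ) :
      HasDerivAt (fun y => c * Real.exp (m * y)) (c * m * Real.exp (m * y)) y := by
    refine (((hasDerivAt_id' y).const_mul m).exp.const_mul c).congr_deriv ?_
    ring
  refine isHolonomic_travelling (fun y => ?_) (fun y => ?_) (fun y => ?_) v x₀
  · simpa only [one_mul] using hexp 1 y
  · simpa only [sq] using hexp m y
  · simpa only [pow_succ m 2] using hexp (m ^ 2) y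

namespace IsJacobiTriple

open SpaceTimeJet

variable {k : ℝ} {sn cn dn : ℝ → ℝ}

theorem hasDerivAt_cn_mul_dn (J : IsJacobiTriple k sn cn dn) (x : ℝ) :
    HasDerivAt (fun x => cn x * dn x) (-(1 + k ^ 2) * sn x + 2 * k ^ 2 * sn x ^ 3) x := by
  refine ((J.hasDerivAt_cn x).mul (J.hasDerivAt_dn x)).congr_deriv ?_
  linear_combination -sn x * J.dn_sq x - k ^ 2 * sn x * J.cn_sq x

theorem isHolonomic_snJet (J : IsJacobiTriple k sn cn dn) (v x₀ σ m : ℝ) :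
    IsHolonomic fun w => (thetaModeAt k sn cn dn v x₀ σ m w).snJet k := by
  refine isHolonomic_travelling J.hasDerivAt_sn J.hasDerivAt_cn_mul_dn
    (φ''' := fun x => (-(1 + k ^ 2) + 6 * k ^ 2 * sn x ^ 2) * (cn x * dn x)) (fun x => ?_)
    (1 + k ^ 2) σ
  refine (((J.hasDerivAt_sn x).const_mul _).add
    (((J.hasDerivAt_sn x).fun_pow 3).const_mul _)).congr_deriv ?_
  push_cast
  ring

theorem isHolonomic_travelling_THf (J : IsJacobiTriple k sn cn dn) (v σ : ℝ) :
    IsHolonomic (travelling (THf k) (fun x => Zjac k dn x * THf k x)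
      (fun x => (Zjac k dn x ^ 2 + (1 - Ecomp k / Kcomp k - k ^ 2 * sn x ^ 2)) * THf k x)
      (fun x => (Zjac k dn x ^ 3 +
        3 * Zjac k dn x * (1 - Ecomp k / Kcomp k - k ^ 2 * sn x ^ 2) -
        2 * k ^ 2 * sn x * (cn x * dn x)) * THf k x) v σ) := by
  refine isHolonomic_travelling J.hasDerivAt_THf (fun x => ?_) (fun x => ?_) v σ
  · refine ((J.hasDerivAt_Zjac x).mul (J.hasDerivAt_THf x)).congr_deriv ?_
    ring
  · have hsq := ((J.hasDerivAt_sn x).fun_pow 2).const_mul (k ^ 2)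
    refine ((((J.hasDerivAt_Zjac x).fun_pow 2).add (hsq.const_sub _)).mul
      (J.hasDerivAt_THf x)).congr_deriv ?_
    simp only [Pi.add_apply]
    push_cast
    ring

theorem isHolonomic_jet (J : IsJacobiTriple k sn cn dn) (v x₀ σ m : ℝ) :
    IsHolonomic fun w =>
      (thetaModeAt k sn cn dn v x₀ σ m w).jet k (1 - Ecomp k / Kcomp k) v := by
  convert (J.isHolonomic_travelling_THf (1 + k ^ 2) σ).mul
    (isHolonomic_travelling_exp m v x₀) using 2 with w
  ext <;> simp only [ThetaMode.jet_val, ThetaMode.jet_dx, ThetaMode.jet_dxx, ThetaMode.jet_dxxx,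
    ThetaMode.jet_dt, mul_val, mul_dx, mul_dxx, mul_dxxx, mul_dt, travelling_val, travelling_dx,
    travelling_dxx, travelling_dxxx, travelling_dt, thetaModeAt_amp, thetaModeAt_zeta,
    thetaModeAt_rate, thetaModeAt_sn, thetaModeAt_sn', xiVar] <;> ring

end IsJacobiTriple

/-- The modes `Θ(ξ + 2α) e^{-2η}`, `Θ(ξ)` and `Θ(ξ - 2α) e^{2η}` of the breather, for `ε = 1`,
`ε = 0` and `ε = -1` respectively. -/
def breatherMode (k : ℝ) (sn cn dn : ℝ → ℝ) (α x₀ ε : ℝ) : ℝ × ℝ → ThetaMode :=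
  thetaModeAt k sn cn dn (cSpeed k sn cn dn α) x₀ (ε * (2 * α)) (-ε * (2 * kapWidth k sn cn dn α))

/-- The jet of the denominator of the breather. -/
def breatherDen (k : ℝ) (sn cn dn : ℝ → ℝ) (α x₀ : ℝ) (w : ℝ × ℝ) : SpaceTimeJet :=
  breatherDenJet k (1 - Ecomp k / Kcomp k) (cSpeed k sn cn dn α) (gammaPar k α)
    (breatherMode k sn cn dn α x₀ 1 w) (breatherMode k sn cn dn α x₀ 0 w)
    (breatherMode k sn cn dn α x₀ (-1) w)

/-- The jet of the numerator of the breather, including the factor `H(K) / Θ(K) = √k`. -/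
def breatherNum (k : ℝ) (sn cn dn : ℝ → ℝ) (α x₀ : ℝ) (w : ℝ × ℝ) : SpaceTimeJet :=
  breatherNumJet k (1 - Ecomp k / Kcomp k) (cSpeed k sn cn dn α) (gammaPar k α)
    (betaRatio k sn α) (breatherMode k sn cn dn α x₀ 1 w) (breatherMode k sn cn dn α x₀ 0 w)
    (breatherMode k sn cn dn α x₀ (-1) w)

open SpaceTimeJet ThetaMode in
theorem breatherDen_val (k : ℝ) (sn cn dn : ℝ → ℝ) (α x₀ : ℝ) (w : ℝ × ℝ) :
    (breatherDen k sn cn dn α x₀ w).val = Dden k sn cn dn α x₀ w := by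
  simp only [breatherDen, breatherDenJet, breatherMode, add_val, scale_val, jet_val,
    thetaModeAt_amp, Dden, etaVar, one_mul, neg_neg, zero_mul, neg_zero, Real.exp_zero, mul_one,
    add_zero, ← sub_eq_add_neg, neg_mul, mul_assoc]

namespace IsJacobiTriple

open SpaceTimeJet ThetaMode

variable {k α ε δ : ℝ} {sn cn dn : ℝ → ℝ}

theorem isHolonomic_breatherDen (J : IsJacobiTriple k sn cn dn) (α x₀ : ℝ) :
    IsHolonomic (breatherDen k sn cn dn α x₀) :=
  ((J.isHolonomic_jet _ _ _ _).add (J.isHolonomic_jet _ _ _ _)).add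
    ((J.isHolonomic_jet _ _ _ _).scale _)

theorem isHolonomic_breatherNum (J : IsJacobiTriple k sn cn dn) (α x₀ : ℝ) :
    IsHolonomic (breatherNum k sn cn dn α x₀) := by
  have hmode (ε : ℝ) : IsHolonomic fun w =>
      ((breatherMode k sn cn dn α x₀ ε w).jet k (1 - Ecomp k / Kcomp k)
        (cSpeed k sn cn dn α)).mul ((breatherMode k sn cn dn α x₀ ε w).snJet k) :=
    (J.isHolonomic_jet _ _ _ _).mul (J.isHolonomic_snJet _ _ _ _)
  exact (((hmode 1).add (hmode (-1))).add ((hmode 0).scale _)).scale k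

theorem breatherMode_amp_mul (J : IsJacobiTriple k sn cn dn) (α x₀ : ℝ) (w : ℝ × ℝ) :
    (breatherMode k sn cn dn α x₀ 1 w).amp * (breatherMode k sn cn dn α x₀ (-1) w).amp =
      gammaPar k α ^ 2 * (breatherMode k sn cn dn α x₀ 0 w).amp ^ 2 *
        (1 - k ^ 2 * sn (xiVar k w) ^ 2 * sn (2 * α) ^ 2) := by
  have hΘ := (J.THf_pos 0).ne'
  have hprod := J.THf_add_mul_THf_sub (xiVar k w) (2 * α)
  simp only [breatherMode, thetaModeAt_amp, gammaPar, one_mul, neg_neg, zero_mul, neg_zero,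
    Real.exp_zero, mul_one, add_zero, ← sub_eq_add_neg, neg_mul, Real.exp_neg]
  field_simp
  linear_combination hprod

theorem breatherMode_quadratic_half_shift (J : IsJacobiTriple k sn cn dn) (x₀ : ℝ)
    (hε : ε = δ + 1) (w : ℝ × ℝ) :
    let M := breatherMode k sn cn dn α x₀ ε w
    let N := breatherMode k sn cn dn α x₀ δ w
    (M.zeta + M.rate - (N.zeta + N.rate)) ^ 2 - k ^ 2 * (M.sn ^ 2 + N.sn ^ 2) +
      2 * k ^ 2 * betaRatio k sn α * M.sn * N.sn = 0 := by
  have h := J.quadratic_relation_half_shift (xiVar k w + δ * (2 * α) + α) α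
  rw [add_assoc (xiVar k w + _), ← two_mul, add_assoc, ← add_one_mul, ← hε,
    add_sub_cancel_right] at h
  simp only [breatherMode, thetaModeAt_zeta, thetaModeAt_rate, thetaModeAt_sn]
  rw [← h, hε]
  ring

theorem breatherMode_hirotaMkdv_half_shift (J : IsJacobiTriple k sn cn dn)
    (hκ : kapWidth k sn cn dn α ≠ 0) (lam x₀ : ℝ) (hε : ε = δ + 1) (w : ℝ × ℝ) :
    let v := cSpeed k sn cn dn α
    let M := breatherMode k sn cn dn α x₀ ε w
    let N := breatherMode k sn cn dn α x₀ δ w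
    hirotaMkdv lam ((M.jet k lam v).mul (M.snJet k)) (N.jet k lam v) = 0 ∧
      hirotaMkdv lam ((N.jet k lam v).mul (N.snJet k)) (M.jet k lam v) = 0 := by
  have h := J.crossHirota_half_shift hκ (xiVar k w + δ * (2 * α) + α)
  rw [add_assoc (xiVar k w + _), ← two_mul, add_assoc, ← add_one_mul, ← hε,
    add_sub_cancel_right] at h
  simp only [hirotaMkdv_mul_snJet, breatherMode, thetaModeAt_zeta, thetaModeAt_rate,
    thetaModeAt_sn, thetaModeAt_sn']
  refine ⟨mul_eq_zero_of_right _ (Eq.trans ?_ h.1), mul_eq_zero_of_right _ (Eq.trans ?_ h.2)⟩ <;>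
    rw [hε] <;> ring_nf

theorem breather_hirota_sq (J : IsJacobiTriple k sn cn dn) (α x₀ : ℝ) (w : ℝ × ℝ) :
    (breatherDen k sn cn dn α x₀ w).val * (breatherDen k sn cn dn α x₀ w).dxx -
        (breatherDen k sn cn dn α x₀ w).dx ^ 2 + (breatherNum k sn cn dn α x₀ w).val ^ 2 =
      (1 - Ecomp k / Kcomp k) * (breatherDen k sn cn dn α x₀ w).val ^ 2 := by
  refine breatherJet_hirota_sq (J.breatherMode_amp_mul α x₀ w)
    (J.breatherMode_quadratic_half_shift x₀ (by ring) w)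
    (J.breatherMode_quadratic_half_shift x₀ (by ring) w) ?_
  have h := J.quadratic_relation_full_shift (xiVar k w) α
  simp only [breatherMode, thetaModeAt_zeta, thetaModeAt_rate, thetaModeAt_sn, one_mul,
    neg_one_mul, zero_mul, add_zero, ← sub_eq_add_neg]
  rw [← h]
  ring

theorem breather_hirotaMkdv (J : IsJacobiTriple k sn cn dn) (hκ : kapWidth k sn cn dn α ≠ 0)
    (x₀ : ℝ) (w : ℝ × ℝ) :
    hirotaMkdv (1 - Ecomp k / Kcomp k) (breatherNum k sn cn dn α x₀ w)
      (breatherDen k sn cn dn α x₀ w) = 0 := by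
  obtain ⟨h₀₁, h₁₀⟩ := J.breatherMode_hirotaMkdv_half_shift hκ (1 - Ecomp k / Kcomp k) x₀
    (zero_add 1).symm w
  obtain ⟨h₁₂, h₂₁⟩ := J.breatherMode_hirotaMkdv_half_shift hκ (1 - Ecomp k / Kcomp k) x₀
    (neg_add_cancel 1).symm w
  refine breatherJet_hirotaMkdv h₀₁ h₁₀ h₁₂ h₂₁ ?_
  rw [hirotaMkdv_mul_snJet, hirotaMkdv_mul_snJet,
    mul_comm (breatherMode k sn cn dn α x₀ (-1) w).amp, ← mul_add]
  refine mul_eq_zero_of_right _ (Eq.trans ?_ (J.crossHirota_full_shift hκ (xiVar k w)))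
  simp only [breatherMode, thetaModeAt_zeta, thetaModeAt_rate, thetaModeAt_sn, thetaModeAt_sn',
    one_mul, neg_one_mul, neg_neg, ← sub_eq_add_neg]
  ring_nf

theorem breatherNum_val (J : IsJacobiTriple k sn cn dn) (α x₀ : ℝ) (w : ℝ × ℝ) :
    (breatherNum k sn cn dn α x₀ w).val = Hf k (Kcomp k) / THf k (Kcomp k) *
      (Hf k (xiVar k w + 2 * α) * Real.exp (-(2 * etaVar k sn cn dn α x₀ w)) +
        Hf k (xiVar k w - 2 * α) * Real.exp (2 * etaVar k sn cn dn α x₀ w) +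
        2 * betaPar k sn α * Hf k (xiVar k w)) := by
  have hquot : Hf k (Kcomp k) / THf k (Kcomp k) = √k := by
    rw [J.Hf_eq, J.sn_Kcomp, mul_one, mul_div_cancel_right₀ _ (J.THf_pos _).ne']
  have hβ : betaPar k sn α = betaRatio k sn α * gammaPar k α := rfl
  rw [hquot, hβ]
  simp only [breatherNum, breatherNumJet, breatherMode, add_val, scale_val, mul_val, jet_val,
    snJet_val, thetaModeAt_amp, thetaModeAt_sn, J.Hf_eq, etaVar, one_mul, neg_neg, zero_mul,
    neg_zero, Real.exp_zero, mul_one, add_zero, ← sub_eq_add_neg, neg_mul, mul_assoc]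
  have hsqrt (S : ℝ) : k * S = √k * (√k * S) := by
    rw [← mul_assoc, Real.mul_self_sqrt J.modulus_pos.le]
  rw [hsqrt]
  ring

theorem uhat_eq_div (J : IsJacobiTriple k sn cn dn) (α x₀ : ℝ) :
    uhat k sn cn dn α x₀ =
      fun w => (breatherNum k sn cn dn α x₀ w).val / (breatherDen k sn cn dn α x₀ w).val := by
  funext w
  rw [J.breatherNum_val, breatherDen_val, uhat]

theorem Dden_pos (J : IsJacobiTriple k sn cn dn) (α x₀ : ℝ) (w : ℝ × ℝ) :
    0 < Dden k sn cn dn α x₀ w := by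
  have hγ : 0 < gammaPar k α := div_pos (J.THf_pos _) (J.THf_pos _)
  have h₀ := J.THf_pos (xiVar k w + 2 * α)
  have h₁ := J.THf_pos (xiVar k w)
  have h₂ := J.THf_pos (xiVar k w - 2 * α)
  unfold Dden
  positivity

theorem contDiff_uhat (J : IsJacobiTriple k sn cn dn) (α x₀ : ℝ) :
    ContDiff ℝ (⊤ : ℕ∞) (uhat k sn cn dn α x₀) := by
  have hΘ := J.contDiff_THf
  have hH := J.contDiff_Hf
  have hξ : ContDiff ℝ (⊤ : ℕ∞) (xiVar k) := by unfold xiVar; fun_prop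
  have hη : ContDiff ℝ (⊤ : ℕ∞) (etaVar k sn cn dn α x₀) := by unfold etaVar; fun_prop
  have hD : ContDiff ℝ (⊤ : ℕ∞) (Dden k sn cn dn α x₀) := by unfold Dden; fun_prop
  refine ContDiff.div ?_ hD fun w => (J.Dden_pos α x₀ w).ne'
  fun_prop

end IsJacobiTriple

theorem dark_breather_solves_mkdv_general {k : ℝ} {sn cn dn : ℝ → ℝ}
    (J : IsJacobiTriple k sn cn dn) {α : ℝ} (hκ : kapWidth k sn cn dn α ≠ 0) (x₀ : ℝ) :
    (∀ w : ℝ × ℝ, 0 < Dden k sn cn dn α x₀ w) ∧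
    ContDiff ℝ (⊤ : ℕ∞) (uhat k sn cn dn α x₀) ∧
    (∀ w : ℝ × ℝ,
      ut (uhat k sn cn dn α x₀) w
      - 6 * (uhat k sn cn dn α x₀ w) ^ 2 * ux (uhat k sn cn dn α x₀) w
      + ux (ux (ux (uhat k sn cn dn α x₀))) w = 0) := by
  refine ⟨J.Dden_pos α x₀, J.contDiff_uhat α x₀, ?_⟩
  have hden (w : ℝ × ℝ) : (breatherDen k sn cn dn α x₀ w).val ≠ 0 := by
    rw [breatherDen_val]
    exact (J.Dden_pos α x₀ w).ne'
  rw [J.uhat_eq_div]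
  exact SpaceTimeJet.mkdv_of_hirota (J.isHolonomic_breatherDen α x₀)
    (J.isHolonomic_breatherNum α x₀) hden (J.breather_hirota_sq α x₀) (J.breather_hirotaMkdv hκ x₀)

/-- The dark breather on the snoidal wave background: its denominator is strictly positive
everywhere, and `û` is a smooth solution of the defocusing mKdV equation
`û_t − 6û²û_x + û_xxx = 0` on `ℝ × ℝ`. -/
theorem dark_breather_solves_mkdv
    (k : ℝ) (hk : k ∈ Set.Ioo (0 : ℝ) 1)
    (sn cn dn : ℝ → ℝ)
    (hsn : ∀ x, HasDerivAt sn (cn x * dn x) x)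
    (hcn : ∀ x, HasDerivAt cn (-(sn x * dn x)) x)
    (hdn : ∀ x, HasDerivAt dn (-(k ^ 2 * sn x * cn x)) x)
    (hsn0 : sn 0 = 0) (hcn0 : cn 0 = 1) (hdn0 : dn 0 = 1)
    (α : ℝ) (hα : α ∈ Set.Ioo 0 (Kcomp k)) (x₀ : ℝ) :
    (∀ w : ℝ × ℝ, 0 < Dden k sn cn dn α x₀ w) ∧
    ContDiff ℝ (⊤ : ℕ∞) (uhat k sn cn dn α x₀) ∧
    (∀ w : ℝ × ℝ,
      ut (uhat k sn cn dn α x₀) w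
      - 6 * (uhat k sn cn dn α x₀ w) ^ 2 * ux (uhat k sn cn dn α x₀) w
      + ux (ux (ux (uhat k sn cn dn α x₀))) w = 0) := by
  have J : IsJacobiTriple k sn cn dn := ⟨hk.1, hk.2, hsn, hcn, hdn, hsn0, hcn0, hdn0⟩
  exact dark_breather_solves_mkdv_general J (J.kapWidth_pos hα).ne' x₀

end
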